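/- Let 0 < K < 1/3 and let α ∈ (0,1) satisfy (1−K)α > 2/3. Then for every δ > 0 there exist ε > 0 and C > 0 such that the following holds: if (v,L) is a smooth solution of the expansion-normalized Euler system on [1,∞) × ℝ, 2π-periodic in x, whose initial data at t = 1 satisfy |v̄(1)| + ‖(v(1,·), L(1,·))‖₍₂₎ < ε, then the mean velocity satisfies |v̄(t)| ≤ C · t^(−α(1−3K) + δ) for all t ≥ 1. -/

import Mathlib

open MeasureTheory

/-- Partial derivative in the time variable of a function of `(t, x)`. -/
noncomputable def pderivT (f : ℝ → ℝ → ℝ) (t x : ℝ) : ℝ := deriv (fun s => f s x) t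

/-- Partial derivative in the space variable of a function of `(t, x)`. -/
noncomputable def pderivX (f : ℝ → ℝ → ℝ) (t x : ℝ) : ℝ := deriv (fun y => f t y) x

/-- The `L²` norm of a function over one period `[0, 2π]`. -/
noncomputable def L2normCirc (g : ℝ → ℝ) : ℝ :=
  Real.sqrt (∫ x in (0:ℝ)..(2 * Real.pi), (g x) ^ 2)

/-- The norm `‖(v,L)‖₍₂₎ = ‖∂ₓv‖_{L²} + ‖∂ₓ²v‖_{L²} + ‖∂ₓL‖_{L²} + ‖∂ₓ²L‖_{L²}`
at time `t`. -/
noncomputable def sobolevNorm2 (v L : ℝ → ℝ → ℝ) (t : ℝ) : ℝ :=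
  L2normCirc (fun x => deriv (v t) x) + L2normCirc (fun x => deriv (deriv (v t)) x)
    + L2normCirc (fun x => deriv (L t) x) + L2normCirc (fun x => deriv (deriv (L t)) x)

/-- The mean velocity `v̄(t) = ∫₀^{2π} v(t,x) dx`. -/
noncomputable def meanVel (v : ℝ → ℝ → ℝ) (t : ℝ) : ℝ :=
  ∫ x in (0:ℝ)..(2 * Real.pi), v t x

/-- The expansion-normalized relativistic Euler system on `[1,∞) × ℝ` with expansion
exponent `α` and (squared) sound speed `K`. -/
def IsEulerSolution (α K : ℝ) (v L : ℝ → ℝ → ℝ) : Prop :=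
  ∀ t, 1 ≤ t → ∀ x : ℝ,
    (pderivT v t x =
      -(α * (1 - 3 * K) / t) * v t x
      - t ^ (-α) * ((1 - K) / (1 - K * (v t x) ^ 2)) * v t x * pderivX v t x
      - t ^ (-α) * (K / (1 + K)) * ((1 - (v t x) ^ 2) ^ 2 / (1 - K * (v t x) ^ 2))
          * pderivX L t x
      + α * (1 - K) * (1 - 3 * K) * (t ^ (-α) / (1 - K * (v t x) ^ 2)) * (v t x) ^ 3)
    ∧ (pderivT L t x =
      -((1 + K) / (1 - K * (v t x) ^ 2)) * t ^ (-α) * pderivX v t x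
      - ((1 - K) / (1 - K * (v t x) ^ 2)) * t ^ (-α) * v t x * pderivX L t x
      + α * (1 + K) * (1 - 3 * K) * (t ^ (-α) / (1 - K * (v t x) ^ 2)) * (v t x) ^ 2)

/-!
In the rapidity `y = artanh v` and the rescaled density `l = (√K / (1 + K)) L` the Euler system is
symmetric, so that top-order terms cancel in the energy `∫ y''² + l''²`. Only `y` is damped, at the
rate `β / t` with `β = α (1 - 3 K)`, but the commutator of the damping with transport transfers it
to `l`: correcting the energy by a small multiple of `∫ y'' l'`, whose time derivative controls
`∫ l''²`, shows that the whole energy decays like `t^(-β)`. Nonlinear terms of the energy estimate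
have size `t^(-(α + β / 2))`, which is integrable exactly when `(1 - K) α > 2 / 3`.

The velocity equation is a damping term, plus a divergence, plus a remainder that is cubic in
`v` and `∂ₓL`; hence the mean velocity decays at the damping rate itself. Poincaré and Sobolev
inequalities on the circle turn these bounds back into the pointwise smallness that was assumed,
and a continuity argument closes.
-/

section

open Set Filter Topology Function

/-! ### Calculus on a slab -/

/-- `C^n` regularity of a function of `(t, x)` on the slab `S ×ˢ ℝ`, up to its boundary. -/
def SlabContDiff (n : WithTop ℕ∞) (S : Set ℝ) (f : ℝ → ℝ → ℝ) : Prop :=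
  ContDiffOn ℝ n (fun p : ℝ × ℝ => f p.1 p.2) (S ×ˢ univ)

namespace SlabContDiff

variable {n m : WithTop ℕ∞} {S : Set ℝ} {f g : ℝ → ℝ → ℝ} {t x : ℝ}

theorem of_le (hf : SlabContDiff n S f) (h : m ≤ n) : SlabContDiff m S f :=
  ContDiffOn.of_le hf h

theorem mono {S' : Set ℝ} (hf : SlabContDiff n S f) (h : S' ⊆ S) : SlabContDiff n S' f :=
  ContDiffOn.mono hf (prod_mono h subset_rfl)

theorem mul (hf : SlabContDiff n S f) (hg : SlabContDiff n S g) :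
    SlabContDiff n S (fun t x => f t x * g t x) :=
  ContDiffOn.mul hf hg

theorem const_mul (c : ℝ) (hf : SlabContDiff n S f) : SlabContDiff n S (fun t x => c * f t x) :=
  ContDiffOn.mul contDiffOn_const hf

theorem pow (hf : SlabContDiff n S f) (k : ℕ) : SlabContDiff n S (fun t x => f t x ^ k) :=
  ContDiffOn.pow hf k

theorem slice (hf : SlabContDiff n S f) (ht : t ∈ S) : ContDiff ℝ n (f t) :=
  contDiffOn_univ.1 <| ContDiffOn.comp (t := S ×ˢ univ) hf (contDiff_prodMk_right t).contDiffOn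
    fun _ _ => ⟨ht, mem_univ _⟩

theorem contDiffAt (hf : SlabContDiff n S f) (ht : S ∈ 𝓝 t) (x : ℝ) :
    ContDiffAt ℝ n (fun p : ℝ × ℝ => f p.1 p.2) (t, x) :=
  ContDiffOn.contDiffAt hf (prod_mem_nhds ht univ_mem)

theorem hasDerivAt_space (hf : SlabContDiff 1 S f) (ht : t ∈ S) (x : ℝ) :
    HasDerivAt (f t)
      (fderivWithin ℝ (fun p : ℝ × ℝ => f p.1 p.2) (S ×ˢ univ) (t, x) (0, 1)) x := by
  have hF : HasFDerivWithinAt (fun p : ℝ × ℝ => f p.1 p.2) _ (S ×ˢ univ) (t, x) :=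
    (hf.differentiableOn one_ne_zero (t, x) ⟨ht, mem_univ _⟩).hasFDerivWithinAt
  have hline : HasDerivWithinAt (fun y : ℝ => (t, y)) ((0 : ℝ), (1 : ℝ)) univ x :=
    ((hasDerivAt_const x t).prodMk (hasDerivAt_id x)).hasDerivWithinAt
  exact (hF.comp_hasDerivWithinAt x hline fun _ _ => ⟨ht, mem_univ _⟩).hasDerivAt univ_mem

theorem partialX (hS : UniqueDiffOn ℝ S) (hf : SlabContDiff (n + 1) S f) :
    SlabContDiff n S (pderivX f) := by
  have h : ContDiffOn ℝ n (fun p : ℝ × ℝ =>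
      fderivWithin ℝ (fun p : ℝ × ℝ => f p.1 p.2) (S ×ˢ univ) p (0, 1)) (S ×ˢ univ) :=
    (ContDiffOn.fderivWithin hf (hS.prod uniqueDiffOn_univ) le_rfl).clm_apply contDiffOn_const
  exact h.congr fun p hp => ((hf.of_le le_add_self).hasDerivAt_space hp.1 p.2).deriv

theorem pderivX_eq_fderiv (hf : SlabContDiff 1 S f) (ht : S ∈ 𝓝 t) (x : ℝ) :
    pderivX f t x = fderiv ℝ (fun p : ℝ × ℝ => f p.1 p.2) (t, x) (0, 1) := by
  rw [← fderivWithin_of_mem_nhds (prod_mem_nhds ht univ_mem)]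
  exact (hf.hasDerivAt_space (mem_of_mem_nhds ht) x).deriv

theorem hasDerivAt_time (hf : SlabContDiff 1 S f) (ht : S ∈ 𝓝 t) (x : ℝ) :
    HasDerivAt (fun s => f s x) (pderivT f t x) t := by
  have hF := ((hf.contDiffAt ht x).differentiableAt one_ne_zero).hasFDerivAt
  have hline : HasDerivAt (fun s : ℝ => (s, x)) ((1 : ℝ), (0 : ℝ)) t :=
    (hasDerivAt_id t).prodMk (hasDerivAt_const t x)
  exact (hF.comp_hasDerivAt t hline).differentiableAt.hasDerivAt

theorem pderivT_eq_fderiv (hf : SlabContDiff 1 S f) (ht : S ∈ 𝓝 t) (x : ℝ) :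
    pderivT f t x = fderiv ℝ (fun p : ℝ × ℝ => f p.1 p.2) (t, x) (1, 0) := by
  have hF := ((hf.contDiffAt ht x).differentiableAt one_ne_zero).hasFDerivAt
  have hline : HasDerivAt (fun s : ℝ => (s, x)) ((1 : ℝ), (0 : ℝ)) t :=
    (hasDerivAt_id t).prodMk (hasDerivAt_const t x)
  exact (hF.comp_hasDerivAt t hline).deriv

theorem continuousAt_pderivT (hf : SlabContDiff 1 S f) (ht : S ∈ 𝓝 t) (x : ℝ) :
    ContinuousAt (fun p : ℝ × ℝ => pderivT f p.1 p.2) (t, x) := by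
  have h : ContinuousAt (fun p : ℝ × ℝ => fderiv ℝ (fun p : ℝ × ℝ => f p.1 p.2) p (1, 0)) (t, x) :=
    ((hf.contDiffAt ht x).fderiv_right (m := 0) le_rfl).continuousAt.clm_apply continuousAt_const
  refine h.congr ?_
  filter_upwards [(continuous_fst.tendsto (t, x)).eventually (eventually_mem_nhds_iff.2 ht)]
    with p hp
  exact (hf.pderivT_eq_fderiv hp p.2).symm

theorem pderivT_pderivX (hf : SlabContDiff 2 S f) (ht : S ∈ 𝓝 t) (x : ℝ) :
    pderivT (pderivX f) t x = pderivX (pderivT f) t x := by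
  set F : ℝ × ℝ → ℝ := fun p => f p.1 p.2
  have hf₁ : SlabContDiff 1 S f := hf.of_le one_le_two
  have hsymm : IsSymmSndFDerivAt ℝ F (t, x) := (hf.contDiffAt ht x).isSymmSndFDerivAt (by simp)
  have hF' : HasFDerivAt (fderiv ℝ F) (fderiv ℝ (fderiv ℝ F) (t, x)) (t, x) :=
    (((hf.contDiffAt ht x).fderiv_right (m := 1) le_rfl).differentiableAt one_ne_zero).hasFDerivAt
  have hspace : HasDerivAt (fun y => fderiv ℝ F (t, y) (1, 0))
      (fderiv ℝ (fderiv ℝ F) (t, x) (0, 1) (1, 0)) x := by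
    have hline : HasDerivAt (fun y : ℝ => (t, y)) ((0 : ℝ), (1 : ℝ)) x :=
      (hasDerivAt_const x t).prodMk (hasDerivAt_id x)
    have hcomp := hF'.comp_hasDerivAt x hline
    simpa using hcomp.clm_apply (hasDerivAt_const x ((1 : ℝ), (0 : ℝ)))
  have htime : HasDerivAt (fun s => fderiv ℝ F (s, x) (0, 1))
      (fderiv ℝ (fderiv ℝ F) (t, x) (1, 0) (0, 1)) t := by
    have hline : HasDerivAt (fun s : ℝ => (s, x)) ((1 : ℝ), (0 : ℝ)) t :=
      (hasDerivAt_id t).prodMk (hasDerivAt_const t x)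
    have hcomp := hF'.comp_hasDerivAt t hline
    simpa using hcomp.clm_apply (hasDerivAt_const t ((0 : ℝ), (1 : ℝ)))
  calc pderivT (pderivX f) t x = fderiv ℝ (fderiv ℝ F) (t, x) (1, 0) (0, 1) := by
        refine (htime.congr_of_eventuallyEq ?_).deriv
        filter_upwards [eventually_mem_nhds_iff.2 ht] with s hs
        exact hf₁.pderivX_eq_fderiv hs x
    _ = fderiv ℝ (fderiv ℝ F) (t, x) (0, 1) (1, 0) := hsymm.eq _ _
    _ = pderivX (pderivT f) t x := by
        refine (hspace.congr_of_eventuallyEq (Eventually.of_forall fun y => ?_)).deriv.symm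
        exact hf₁.pderivT_eq_fderiv ht y

theorem pderivT_pderivX_pderivX (hS : UniqueDiffOn ℝ S) (hf : SlabContDiff 3 S f) (ht : S ∈ 𝓝 t)
    (x : ℝ) : pderivT (pderivX (pderivX f)) t x = deriv (deriv (pderivT f t)) x := by
  have hf₂ : SlabContDiff 2 S f := hf.of_le (by norm_num)
  have hf' : SlabContDiff 2 S (pderivX f) := partialX hS (by norm_num; exact hf)
  rw [hf'.pderivT_pderivX ht]
  exact congrArg (fun h => deriv h x) (funext (hf₂.pderivT_pderivX ht))

theorem continuousOn_integral (hf : SlabContDiff 0 S f) (a b : ℝ) :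
    ContinuousOn (fun t => ∫ x in a..b, f t x) S := by
  have h : Continuous fun p : S × ℝ => f p.1 p.2 :=
    (ContDiffOn.continuousOn hf).comp_continuous
      (continuous_subtype_val.prodMap continuous_id) fun p => ⟨p.1.2, mem_univ _⟩
  exact continuousOn_iff_continuous_domRestrict.2 <|
    intervalIntegral.continuous_parametric_intervalIntegral_of_continuous' h a b

theorem hasDerivAt_integral (hf : SlabContDiff 1 S f) (ht : S ∈ 𝓝 t) (a b : ℝ) :
    HasDerivAt (fun t => ∫ x in a..b, f t x) (∫ x in a..b, pderivT f t x) t := by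
  obtain ⟨r, hr, hrS⟩ := Metric.nhds_basis_closedBall.mem_iff.1 (eventually_mem_nhds_iff.2 ht)
  have hslice : ∀ s, S ∈ 𝓝 s → Continuous (f s) := fun s hs =>
    (hf.slice (mem_of_mem_nhds hs)).continuous
  obtain ⟨M, hM⟩ := ((isCompact_closedBall t r).prod (isCompact_uIcc (a := a) (b := b))
    ).exists_bound_of_continuousOn (f := fun p : ℝ × ℝ => pderivT f p.1 p.2)
      fun p hp => (hf.continuousAt_pderivT (hrS hp.1) p.2).continuousWithinAt
  have hcont : Continuous (pderivT f t) := continuous_iff_continuousAt.2 fun x =>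
    (hf.continuousAt_pderivT ht x).comp (Continuous.prodMk_right t).continuousAt
  refine (intervalIntegral.hasDerivAt_integral_of_dominated_loc_of_deriv_le (bound := fun _ => M)
    (Metric.closedBall_mem_nhds t hr) ?_ ((hslice t ht).intervalIntegrable _ _)
    hcont.aestronglyMeasurable ?_ intervalIntegrable_const ?_).2
  · filter_upwards [eventually_mem_nhds_iff.2 ht] with s hs
    exact (hslice s hs).aestronglyMeasurable
  · exact Eventually.of_forall fun x hx s hs => hM (s, x) ⟨hs, uIoc_subset_uIcc hx⟩
  · exact Eventually.of_forall fun x _ s hs => hf.hasDerivAt_time (hrS hs) x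

end SlabContDiff

/-! ### Periodic functions of one variable -/

section Periodic

variable {P : ℝ} {φ : ℝ → ℝ}

theorem periodic_deriv (h : Periodic φ P) : Periodic (deriv φ) P := fun x => by
  rw [← deriv_comp_add_const]
  exact congrArg (fun g => deriv g x) (funext h)

theorem integral_deriv_eq_zero_of_periodic (hφ : ContDiff ℝ 1 φ) (hper : Periodic φ P) :
    ∫ x in 0..P, deriv φ x = 0 := by
  rw [intervalIntegral.integral_deriv_eq_sub (fun x _ => hφ.differentiable one_ne_zero x)
    ((hφ.continuous_deriv le_rfl).intervalIntegrable _ _), sub_eq_zero]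
  simpa using hper 0

theorem integral_le_of_le_deriv_add {e R : ℝ → ℝ} (hP : 0 ≤ P) (he : Continuous e)
    (hR : Continuous R) (hφ : ContDiff ℝ 1 φ) (hper : Periodic φ P)
    (h : ∀ x, e x ≤ deriv φ x + R x) : ∫ x in 0..P, e x ≤ ∫ x in 0..P, R x := by
  have hφ' := hφ.continuous_deriv le_rfl
  calc ∫ x in 0..P, e x ≤ ∫ x in 0..P, (deriv φ x + R x) :=
        intervalIntegral.integral_mono hP (he.intervalIntegrable _ _)
          ((hφ'.add hR).intervalIntegrable _ _) h
    _ = ∫ x in 0..P, R x := by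
        rw [intervalIntegral.integral_add (hφ'.intervalIntegrable _ _) (hR.intervalIntegrable _ _),
          integral_deriv_eq_zero_of_periodic hφ hper, zero_add]

theorem sq_integral_le_mul_integral_sq {a b : ℝ} (hab : a < b) (hφ : Continuous φ) :
    (∫ x in a..b, φ x) ^ 2 ≤ (b - a) * ∫ x in a..b, φ x ^ 2 := by
  set I := ∫ x in a..b, φ x
  have hvar : 0 ≤ ∫ x in a..b, ((b - a) * φ x - I) ^ 2 :=
    intervalIntegral.integral_nonneg hab.le fun _ _ => sq_nonneg _
  have hexpand : ∫ x in a..b, ((b - a) * φ x - I) ^ 2 =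
      (b - a) * ((b - a) * (∫ x in a..b, φ x ^ 2) - I ^ 2) := by
    calc ∫ x in a..b, ((b - a) * φ x - I) ^ 2
        = ∫ x in a..b, ((b - a) ^ 2 * φ x ^ 2 - 2 * (b - a) * I * φ x + I ^ 2) :=
          intervalIntegral.integral_congr fun x _ => by ring
      _ = (b - a) ^ 2 * (∫ x in a..b, φ x ^ 2) - 2 * (b - a) * I * I + (b - a) * I ^ 2 := by
          rw [intervalIntegral.integral_add
              (Continuous.intervalIntegrable (by fun_prop) _ _) intervalIntegrable_const,
            intervalIntegral.integral_sub (Continuous.intervalIntegrable (by fun_prop) _ _)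
              (Continuous.intervalIntegrable (by fun_prop) _ _),
            intervalIntegral.integral_const_mul, intervalIntegral.integral_const_mul,
            intervalIntegral.integral_const, smul_eq_mul]
      _ = _ := by ring
  rw [hexpand] at hvar
  linarith [nonneg_of_mul_nonneg_right hvar (sub_pos.2 hab)]

theorem sq_deriv_le_integral_sq (hP : 0 < P) (hφ : ContDiff ℝ 2 φ) (hper : Periodic φ P) (x : ℝ) :
    deriv φ x ^ 2 ≤ P * ∫ x in 0..P, deriv (deriv φ) x ^ 2 := by
  have hφ' : ContDiff ℝ 1 (deriv φ) := hφ.deriv'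
  have hφ'' : Continuous (deriv (deriv φ)) := hφ'.continuous_deriv le_rfl
  obtain ⟨w, hw, hw0⟩ := exists_deriv_eq_zero hP hφ.continuous.continuousOn
    (by simpa using (hper 0).symm)
  obtain ⟨z, hz, hzx⟩ := (periodic_deriv hper).exists_mem_Ico₀ hP x
  have hsub : uIoc w z ⊆ uIoc 0 P := by
    rw [uIoc_of_le hP.le]
    exact Ioc_subset_Ioc (le_min hw.1.le hz.1) (max_le hw.2.le hz.2.le)
  have hz_le : |deriv φ z| ≤ ∫ x in 0..P, |deriv (deriv φ) x| := by
    have hFTC : deriv φ z = ∫ x in w..z, deriv (deriv φ) x := by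
      rw [intervalIntegral.integral_deriv_eq_sub (fun x _ => hφ'.differentiable one_ne_zero x)
        (hφ''.intervalIntegrable _ _), hw0, sub_zero]
    rw [hFTC]
    calc |∫ x in w..z, deriv (deriv φ) x| ≤ |(∫ x in w..z, |deriv (deriv φ) x|)| :=
          intervalIntegral.norm_integral_le_abs_integral_norm (f := deriv (deriv φ))
      _ ≤ |(∫ x in 0..P, |deriv (deriv φ) x|)| :=
          intervalIntegral.abs_integral_mono_interval hsub
            (Eventually.of_forall fun _ => abs_nonneg _) (hφ''.abs.intervalIntegrable _ _)
      _ = ∫ x in 0..P, |deriv (deriv φ) x| :=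
          abs_of_nonneg (intervalIntegral.integral_nonneg hP.le fun _ _ => abs_nonneg _)
  calc deriv φ x ^ 2 = |deriv φ z| ^ 2 := by rw [hzx, sq_abs]
    _ ≤ (∫ x in 0..P, |deriv (deriv φ) x|) ^ 2 := pow_le_pow_left₀ (abs_nonneg _) hz_le 2
    _ ≤ (P - 0) * ∫ x in 0..P, (|deriv (deriv φ) x|) ^ 2 :=
        sq_integral_le_mul_integral_sq hP hφ''.abs
    _ = P * ∫ x in 0..P, deriv (deriv φ) x ^ 2 := by
        simp only [sub_zero, sq_abs]

theorem integral_sq_deriv_le (hP : 0 < P) (hφ : ContDiff ℝ 2 φ) (hper : Periodic φ P) :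
    ∫ x in 0..P, deriv φ x ^ 2 ≤ P ^ 2 * ∫ x in 0..P, deriv (deriv φ) x ^ 2 := by
  have hφ' : Continuous (deriv φ) := hφ.continuous_deriv one_le_two
  calc ∫ x in 0..P, deriv φ x ^ 2 ≤ ∫ _ in 0..P, P * ∫ x in 0..P, deriv (deriv φ) x ^ 2 :=
        intervalIntegral.integral_mono hP.le ((hφ'.pow 2).intervalIntegrable _ _)
          intervalIntegrable_const (sq_deriv_le_integral_sq hP hφ hper)
    _ = P ^ 2 * ∫ x in 0..P, deriv (deriv φ) x ^ 2 := by
        rw [intervalIntegral.integral_const, smul_eq_mul, sub_zero]; ring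

theorem abs_le_abs_mean_add {B : ℝ} (hP : 0 < P) (hφ : Differentiable ℝ φ) (hper : Periodic φ P)
    (hB : ∀ x, |deriv φ x| ≤ B) (x : ℝ) : |φ x| ≤ |∫ x in 0..P, φ x| / P + P * B := by
  have hB0 : 0 ≤ B := (abs_nonneg _).trans (hB 0)
  obtain ⟨z, hz, hzx⟩ := hper.exists_mem_Ico₀ hP x
  have hosc : |∫ y in 0..P, (φ z - φ y)| ≤ B * P * |P - 0| := by
    refine intervalIntegral.norm_integral_le_of_norm_le_const (f := fun y => φ z - φ y)
      fun y hy => ?_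
    rw [uIoc_of_le hP.le] at hy
    calc ‖φ z - φ y‖ ≤ B * ‖z - y‖ := Convex.norm_image_sub_le_of_norm_deriv_le (𝕜 := ℝ) (s := univ)
          (fun x _ => hφ x) (fun x _ => hB x) convex_univ (mem_univ y) (mem_univ z)
      _ ≤ B * P := by
          gcongr
          rw [Real.norm_eq_abs, abs_le]
          constructor <;> linarith [hz.1, hz.2, hy.1, hy.2]
  have hmean : ∫ y in 0..P, (φ z - φ y) = P * φ z - ∫ y in 0..P, φ y := by
    rw [intervalIntegral.integral_sub intervalIntegrable_const
      (hφ.continuous.intervalIntegrable _ _)]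
    simp
  rw [hmean, sub_zero, abs_of_pos hP] at hosc
  have hz_le : P * |φ z| ≤ |∫ y in 0..P, φ y| + B * P * P := by
    rw [← abs_of_pos hP, ← abs_mul, abs_of_pos hP]
    linarith [abs_sub_abs_le_abs_sub (P * φ z) (∫ y in 0..P, φ y)]
  rw [hzx, ← mul_le_mul_iff_of_pos_left hP, mul_add, mul_div_cancel₀ _ hP.ne']
  linarith

end Periodic

/-! ### Second-derivative energy -/

section Composition

variable {f w : ℝ → ℝ}

theorem deriv_comp_apply (hf : ∀ x, DifferentiableAt ℝ f (w x)) (hw : Differentiable ℝ w) :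
    deriv (fun x => f (w x)) = fun x => deriv f (w x) * deriv w x :=
  funext fun x => deriv_comp x (hf x) (hw x)

theorem deriv_deriv_comp (hf : ∀ x, ContDiffAt ℝ 2 f (w x)) (hw : ContDiff ℝ 2 w) (x : ℝ) :
    deriv (deriv fun x => f (w x)) x =
      deriv f (w x) * deriv (deriv w) x + deriv (deriv f) (w x) * deriv w x ^ 2 := by
  have hw₀ := hw.differentiable two_ne_zero
  have hf' : ∀ x, DifferentiableAt ℝ (deriv f) (w x) := fun x =>
    ((hf x).derivWithin (m := 1) le_rfl).differentiableAt one_ne_zero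
  have hw₁ := hw.differentiable_deriv_two
  have hf'w : DifferentiableAt ℝ (fun x => deriv f (w x)) x := (hf' x).comp x (hw₀ x)
  rw [deriv_comp_apply (fun x => (hf x).differentiableAt two_ne_zero) hw₀,
    deriv_fun_mul hf'w (hw₁ x), congrFun (deriv_comp_apply hf' hw₀) x]
  ring

theorem deriv_deriv_mul (hf : ContDiff ℝ 2 f) (hw : ContDiff ℝ 2 w) (x : ℝ) :
    deriv (deriv fun x => f x * w x) x =
      deriv (deriv f) x * w x + 2 * (deriv f x * deriv w x) + f x * deriv (deriv w) x := by
  have hf₀ := hf.differentiable two_ne_zero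
  have hw₀ := hw.differentiable two_ne_zero
  have hf₁ := hf.differentiable_deriv_two
  have hw₁ := hw.differentiable_deriv_two
  have h : deriv (fun x => f x * w x) = fun x => deriv f x * w x + f x * deriv w x :=
    funext fun x => deriv_fun_mul (hf₀ x) (hw₀ x)
  rw [h, deriv_fun_add ((hf₁ x).fun_mul (hw₀ x)) ((hf₀ x).fun_mul (hw₁ x)),
    deriv_fun_mul (hf₁ x) (hw₀ x), deriv_fun_mul (hf₀ x) (hw₁ x)]
  ring

end Composition

theorem two_pi_sq_lt : (2 * Real.pi) ^ 2 < 40 := by nlinarith [Real.pi_pos, Real.pi_lt_d2]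

/-- The squared `L²` norm of `f''` over one period `[0, 2π]`. -/
noncomputable def secondEnergy (f : ℝ → ℝ) : ℝ :=
  ∫ x in (0:ℝ)..(2 * Real.pi), deriv (deriv f) x ^ 2

section SecondEnergy

variable {f w : ℝ → ℝ}

theorem secondEnergy_nonneg (f : ℝ → ℝ) : 0 ≤ secondEnergy f :=
  intervalIntegral.integral_nonneg Real.two_pi_pos.le fun _ _ => sq_nonneg _

theorem secondEnergy_const_mul (c : ℝ) (f : ℝ → ℝ) :
    secondEnergy (fun x => c * f x) = c ^ 2 * secondEnergy f := by
  have h : deriv (fun x => c * f x) = fun x => c * deriv f x :=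
    funext fun x => deriv_const_mul_field c
  simp only [secondEnergy, h, deriv_const_mul_field, mul_pow, intervalIntegral.integral_const_mul]

theorem integral_sq_deriv_le_secondEnergy (hw : ContDiff ℝ 2 w) (hper : Periodic w (2 * Real.pi)) :
    ∫ x in (0:ℝ)..(2 * Real.pi), deriv w x ^ 2 ≤ 40 * secondEnergy w :=
  (integral_sq_deriv_le Real.two_pi_pos hw hper).trans
    (mul_le_mul_of_nonneg_right two_pi_sq_lt.le (secondEnergy_nonneg w))

theorem secondEnergy_comp_le {M : ℝ} (hf : ∀ x, ContDiffAt ℝ 2 f (w x)) (hw : ContDiff ℝ 2 w)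
    (hper : Periodic w (2 * Real.pi)) (hM : ∀ x, |deriv f (w x)| ≤ M)
    (hM' : ∀ x, |deriv (deriv f) (w x) * deriv w x| ≤ M) :
    secondEnergy (fun x => f (w x)) ≤ 82 * M ^ 2 * secondEnergy w := by
  have hw' : Continuous (deriv w) := hw.continuous_deriv one_le_two
  have : Continuous (deriv (deriv w)) := (hw.deriv' (n := 1)).continuous_deriv_one
  have hfw : ContDiff ℝ 2 fun x => f (w x) :=
    contDiff_iff_contDiffAt.2 fun x => (hf x).comp x hw.contDiffAt
  have hfw'' : Continuous (deriv (deriv fun x => f (w x))) :=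
    (hfw.deriv' (n := 1)).continuous_deriv_one
  have hpt : ∀ x, deriv (deriv fun x => f (w x)) x ^ 2 ≤
      2 * M ^ 2 * (deriv (deriv w) x ^ 2 + deriv w x ^ 2) := fun x => by
    rw [deriv_deriv_comp hf hw x]
    have h₁ := sq_le_sq' (abs_le.1 (hM x)).1 (abs_le.1 (hM x)).2
    have h₂ := sq_le_sq' (abs_le.1 (hM' x)).1 (abs_le.1 (hM' x)).2
    calc _ ≤ 2 * (deriv f (w x) ^ 2 * deriv (deriv w) x ^ 2
          + (deriv (deriv f) (w x) * deriv w x) ^ 2 * deriv w x ^ 2) := by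
          linarith [sq_nonneg (deriv f (w x) * deriv (deriv w) x
            - deriv (deriv f) (w x) * deriv w x * deriv w x)]
      _ ≤ 2 * (M ^ 2 * deriv (deriv w) x ^ 2 + M ^ 2 * deriv w x ^ 2) := by gcongr
      _ = _ := by ring
  calc secondEnergy (fun x => f (w x))
      ≤ ∫ x in (0:ℝ)..(2 * Real.pi), 2 * M ^ 2 * (deriv (deriv w) x ^ 2 + deriv w x ^ 2) :=
        intervalIntegral.integral_mono Real.two_pi_pos.le ((hfw''.pow 2).intervalIntegrable _ _)
          (Continuous.intervalIntegrable (by fun_prop) _ _) hpt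
    _ = 2 * M ^ 2 * (secondEnergy w + ∫ x in (0:ℝ)..(2 * Real.pi), deriv w x ^ 2) := by
        rw [intervalIntegral.integral_const_mul, intervalIntegral.integral_add
          (Continuous.intervalIntegrable (by fun_prop) _ _)
          (Continuous.intervalIntegrable (by fun_prop) _ _), secondEnergy]
    _ ≤ 2 * M ^ 2 * (secondEnergy w + 40 * secondEnergy w) := by
        gcongr
        exact integral_sq_deriv_le_secondEnergy hw hper
    _ = 82 * M ^ 2 * secondEnergy w := by ring

end SecondEnergy

/-! ### Quasilinear expressions in one space variable -/

/-- `M` bounds the first two derivatives of `f` on `[-1, 1]`. -/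
def JetBound (f : ℝ → ℝ) (M : ℝ) : Prop :=
  ∀ y, |y| ≤ 1 → |deriv f y| ≤ M ∧ |deriv (deriv f) y| ≤ M

namespace JetBound

variable {f : ℝ → ℝ} {M M' y : ℝ}

theorem mono (h : JetBound f M) (hM : M ≤ M') : JetBound f M' :=
  fun y hy => ⟨(h y hy).1.trans hM, (h y hy).2.trans hM⟩

theorem exists_of_contDiff (hf : ContDiff ℝ 2 f) : ∃ M, 0 ≤ M ∧ JetBound f M := by
  obtain ⟨M₁, h₁⟩ := (isCompact_Icc (a := (-1 : ℝ)) (b := 1)).exists_bound_of_continuousOn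
    (hf.continuous_deriv one_le_two).continuousOn
  obtain ⟨M₂, h₂⟩ := (isCompact_Icc (a := (-1 : ℝ)) (b := 1)).exists_bound_of_continuousOn
    (hf.deriv' (n := 1)).continuous_deriv_one.continuousOn
  have h : JetBound f (max M₁ M₂) := fun y hy =>
    ⟨(h₁ y (abs_le.1 hy)).trans (le_max_left _ _), (h₂ y (abs_le.1 hy)).trans (le_max_right _ _)⟩
  exact ⟨max M₁ M₂, (abs_nonneg _).trans (h 0 (by simp)).1, h⟩

theorem zero (hM : 0 ≤ M) : JetBound 0 M := fun y _ => by simp [Pi.zero_def, hM]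

end JetBound

theorem abs_mul_le {u v U V : ℝ} (hu : |u| ≤ U) (hv : |v| ≤ V) : |u * v| ≤ U * V := by
  rw [abs_mul]
  exact mul_le_mul hu hv (abs_nonneg _) ((abs_nonneg _).trans hu)

theorem abs_sub_zero_le {f : ℝ → ℝ} {M y : ℝ} (hf : Differentiable ℝ f)
    (hM : ∀ z, |z| ≤ 1 → |deriv f z| ≤ M) (hy : |y| ≤ 1) : |f y - f 0| ≤ M * |y| := by
  simpa using Convex.norm_image_sub_le_of_norm_deriv_le (𝕜 := ℝ) (f := f) (C := M) (x := 0)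
    (s := Icc (-1) 1) (fun x _ => hf x) (fun x hx => hM x (abs_le.2 hx)) (convex_Icc (-1) 1)
    (by simp) (abs_le.1 hy)

section LinearCombination

variable {τ σ : ℝ}

theorem deriv_linear_combination {A B H G : ℝ → ℝ} (hA : Differentiable ℝ A)
    (hB : Differentiable ℝ B) (hH : Differentiable ℝ H) (hG : Differentiable ℝ G) (x : ℝ) :
    deriv (fun x => -τ * (A x + B x) - σ * H x + τ * G x) x =
      -τ * (deriv A x + deriv B x) - σ * deriv H x + τ * deriv G x :=
  ((((hA x).hasDerivAt.add (hB x).hasDerivAt).const_mul (-τ)).sub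
    ((hH x).hasDerivAt.const_mul σ) |>.add ((hG x).hasDerivAt.const_mul τ)).deriv

theorem abs_linear_combination_le (hτ : 0 ≤ τ) (hσ : 0 ≤ σ) (A B H G : ℝ) :
    |-τ * (A + B) - σ * H + τ * G| ≤ τ * (|A| + |B|) + σ * |H| + τ * |G| := by
  refine (abs_add_le _ _).trans (add_le_add ((abs_sub _ _).trans (add_le_add ?_ ?_)) ?_)
  · rw [abs_mul, abs_neg, abs_of_nonneg hτ]; gcongr; exact abs_add_le _ _
  · rw [abs_mul, abs_of_nonneg hσ]
  · rw [abs_mul, abs_of_nonneg hτ]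

end LinearCombination

/-- The quasilinear expression `-τ (c(y) y' + d(y) l') - σ h(y) + τ k(y)`. -/
noncomputable def quasilinear (τ σ : ℝ) (c d h k y l : ℝ → ℝ) (x : ℝ) : ℝ :=
  -τ * (c (y x) * deriv y x + d (y x) * deriv l x) - σ * h (y x) + τ * k (y x)

/-- The size `|y'| + |l'| + |y''| + |l''|` of the derivatives of a pair `(y, l)`. -/
noncomputable def jetSize (y l : ℝ → ℝ) (x : ℝ) : ℝ :=
  |deriv y x| + |deriv l x| + |deriv (deriv y) x| + |deriv (deriv l) x|

section JetSize

variable {y l : ℝ → ℝ} (x : ℝ)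

theorem abs_deriv_fst_le_jetSize : |deriv y x| ≤ jetSize y l x := by
  rw [jetSize]; linarith [abs_nonneg (deriv l x), abs_nonneg (deriv (deriv y) x),
    abs_nonneg (deriv (deriv l) x)]

theorem abs_deriv_snd_le_jetSize : |deriv l x| ≤ jetSize y l x := by
  rw [jetSize]; linarith [abs_nonneg (deriv y x), abs_nonneg (deriv (deriv y) x),
    abs_nonneg (deriv (deriv l) x)]

theorem abs_deriv_deriv_fst_le_jetSize : |deriv (deriv y) x| ≤ jetSize y l x := by
  rw [jetSize]; linarith [abs_nonneg (deriv y x), abs_nonneg (deriv l x),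
    abs_nonneg (deriv (deriv l) x)]

theorem abs_deriv_deriv_snd_le_jetSize : |deriv (deriv l) x| ≤ jetSize y l x := by
  rw [jetSize]; linarith [abs_nonneg (deriv y x), abs_nonneg (deriv l x),
    abs_nonneg (deriv (deriv y) x)]

end JetSize

/-- A `2π`-periodic pair `(y, l)` with `y`, `y'` and `l'` bounded by `N ≤ 1`. -/
structure SmallPair (N : ℝ) (y l : ℝ → ℝ) : Prop where
  contDiff_fst : ContDiff ℝ 3 y
  contDiff_snd : ContDiff ℝ 3 l
  periodic_fst : Periodic y (2 * Real.pi)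
  periodic_snd : Periodic l (2 * Real.pi)
  le_one : N ≤ 1
  abs_fst_le : ∀ x, |y x| ≤ N
  abs_deriv_fst_le : ∀ x, |deriv y x| ≤ N
  abs_deriv_snd_le : ∀ x, |deriv l x| ≤ N

namespace SmallPair

variable {N M τ σ : ℝ} {c d h k y l w : ℝ → ℝ}

theorem nonneg (hyl : SmallPair N y l) : 0 ≤ N := (abs_nonneg _).trans (hyl.abs_fst_le 0)

theorem abs_le_one (hyl : SmallPair N y l) (x : ℝ) : |y x| ≤ 1 :=
  (hyl.abs_fst_le x).trans hyl.le_one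

theorem fst_two (hyl : SmallPair N y l) : ContDiff ℝ 2 y := hyl.contDiff_fst.of_le (by norm_num)

theorem snd_two (hyl : SmallPair N y l) : ContDiff ℝ 2 l := hyl.contDiff_snd.of_le (by norm_num)

theorem contDiff_deriv_fst (hyl : SmallPair N y l) : ContDiff ℝ 2 (deriv y) :=
  hyl.contDiff_fst.deriv' (n := 2)

theorem contDiff_deriv_snd (hyl : SmallPair N y l) : ContDiff ℝ 2 (deriv l) :=
  hyl.contDiff_snd.deriv' (n := 2)

theorem contDiff_quasilinear (hyl : SmallPair N y l) (hc : ContDiff ℝ 2 c) (hd : ContDiff ℝ 2 d)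
    (hh : ContDiff ℝ 2 h) (hk : ContDiff ℝ 2 k) : ContDiff ℝ 2 (quasilinear τ σ c d h k y l) := by
  have := hyl.fst_two
  have := hyl.contDiff_deriv_fst
  have := hyl.contDiff_deriv_snd
  unfold quasilinear
  fun_prop

theorem continuous_jetSize (hyl : SmallPair N y l) : Continuous (jetSize y l) := by
  have hy' := hyl.contDiff_deriv_fst.continuous
  have hl' := hyl.contDiff_deriv_snd.continuous
  have hy'' := hyl.contDiff_deriv_fst.continuous_deriv one_le_two
  have hl'' := hyl.contDiff_deriv_snd.continuous_deriv one_le_two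
  unfold jetSize
  fun_prop

theorem quasilinear_periodic (hyl : SmallPair N y l) :
    Periodic (quasilinear τ σ c d h k y l) (2 * Real.pi) := fun x => by
  simp only [quasilinear, hyl.periodic_fst x, periodic_deriv hyl.periodic_fst x,
    periodic_deriv hyl.periodic_snd x]

theorem integral_sq_jetSize_le (hyl : SmallPair N y l) :
    ∫ x in (0:ℝ)..(2 * Real.pi), jetSize y l x ^ 2 ≤ 164 * (secondEnergy y + secondEnergy l) := by
  have hy' := hyl.contDiff_deriv_fst.continuous
  have hl' := hyl.contDiff_deriv_snd.continuous
  have hy'' := hyl.contDiff_deriv_fst.continuous_deriv one_le_two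
  have hl'' := hyl.contDiff_deriv_snd.continuous_deriv one_le_two
  calc ∫ x in (0:ℝ)..(2 * Real.pi), jetSize y l x ^ 2
      ≤ ∫ x in (0:ℝ)..(2 * Real.pi), 4 * (deriv y x ^ 2 + deriv l x ^ 2
          + deriv (deriv y) x ^ 2 + deriv (deriv l) x ^ 2) := by
        refine intervalIntegral.integral_mono Real.two_pi_pos.le
          ((hyl.continuous_jetSize.pow 2).intervalIntegrable _ _)
          (Continuous.intervalIntegrable (by fun_prop) _ _) fun x => ?_
        simp only [jetSize]
        rw [← sq_abs (deriv y x), ← sq_abs (deriv l x), ← sq_abs (deriv (deriv y) x),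
          ← sq_abs (deriv (deriv l) x)]
        nlinarith [sq_nonneg (|deriv y x| - |deriv l x|),
          sq_nonneg (|deriv y x| - |deriv (deriv y) x|),
          sq_nonneg (|deriv y x| - |deriv (deriv l) x|),
          sq_nonneg (|deriv l x| - |deriv (deriv y) x|),
          sq_nonneg (|deriv l x| - |deriv (deriv l) x|),
          sq_nonneg (|deriv (deriv y) x| - |deriv (deriv l) x|)]
    _ = 4 * ((∫ x in (0:ℝ)..(2 * Real.pi), deriv y x ^ 2)
          + (∫ x in (0:ℝ)..(2 * Real.pi), deriv l x ^ 2) + secondEnergy y + secondEnergy l) := by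
        simp only [secondEnergy]
        rw [intervalIntegral.integral_const_mul, intervalIntegral.integral_add,
          intervalIntegral.integral_add, intervalIntegral.integral_add] <;>
        exact Continuous.intervalIntegrable (by fun_prop) _ _
    _ ≤ 4 * (40 * secondEnergy y + 40 * secondEnergy l + secondEnergy y + secondEnergy l) := by
        gcongr
        · exact integral_sq_deriv_le_secondEnergy hyl.fst_two hyl.periodic_fst
        · exact integral_sq_deriv_le_secondEnergy hyl.snd_two hyl.periodic_snd
    _ = 164 * (secondEnergy y + secondEnergy l) := by ring

theorem abs_deriv_comp_le (hyl : SmallPair N y l) (hk : JetBound k M)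
    (hk₁ : Differentiable ℝ (deriv k)) (hk₀ : deriv k 0 = 0) (x : ℝ) : |deriv k (y x)| ≤ M * N := by
  have hM : 0 ≤ M := (abs_nonneg _).trans (hk 0 (by simp)).1
  have h := abs_sub_zero_le hk₁ (fun z hz => (hk z hz).2) (hyl.abs_le_one x)
  rw [hk₀, sub_zero] at h
  exact h.trans (mul_le_mul_of_nonneg_left (hyl.abs_fst_le x) hM)

theorem deriv_quasilinear (hyl : SmallPair N y l) (hc : ContDiff ℝ 2 c) (hd : ContDiff ℝ 2 d)
    (hh : ContDiff ℝ 2 h) (hk : ContDiff ℝ 2 k) (x : ℝ) :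
    deriv (quasilinear τ σ c d h k y l) x =
      -τ * (c (y x) * deriv (deriv y) x + d (y x) * deriv (deriv l) x)
      + (-τ * (deriv c (y x) * deriv y x * deriv y x + deriv d (y x) * deriv y x * deriv l x)
      - σ * (deriv h (y x) * deriv y x) + τ * (deriv k (y x) * deriv y x)) := by
  have hy : HasDerivAt y (deriv y x) x := (hyl.fst_two.differentiable two_ne_zero x).hasDerivAt
  have hcomp : ∀ {f : ℝ → ℝ}, ContDiff ℝ 2 f →
      HasDerivAt (fun x => f (y x)) (deriv f (y x) * deriv y x) x := fun hf =>
    ((hf.differentiable two_ne_zero (y x)).hasDerivAt).comp x hy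
  have hy' := (hyl.contDiff_deriv_fst.differentiable two_ne_zero x).hasDerivAt
  have hl' := (hyl.contDiff_deriv_snd.differentiable two_ne_zero x).hasDerivAt
  have key := ((((hcomp hc).mul hy').add ((hcomp hd).mul hl')).const_mul (-τ)).sub
    ((hcomp hh).const_mul σ) |>.add ((hcomp hk).const_mul τ)
  exact key.deriv.trans (by ring)

theorem abs_deriv_quasilinear_add_le (hyl : SmallPair N y l) (hσ : 0 ≤ σ) (hτ : 0 ≤ τ)
    (hc : ContDiff ℝ 2 c) (hd : ContDiff ℝ 2 d) (hh : ContDiff ℝ 2 h) (hk : ContDiff ℝ 2 k)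
    (hcM : JetBound c M) (hdM : JetBound d M) (hhM : JetBound h M) (hkM : JetBound k M)
    (hk₀ : deriv k 0 = 0) (x : ℝ) :
    |deriv (quasilinear τ σ c d h k y l) x
        + τ * (c (y x) * deriv (deriv y) x + d (y x) * deriv (deriv l) x)|
      ≤ (3 * (τ * (M * N)) + σ * M) * jetSize y l x := by
  have hM : 0 ≤ M := (abs_nonneg _).trans (hcM 0 (by simp)).1
  have hN := hyl.nonneg
  have : 0 ≤ jetSize y l x := (abs_nonneg _).trans (abs_deriv_fst_le_jetSize x)
  have hcy : |deriv c (y x) * deriv y x * deriv y x| ≤ M * N * jetSize y l x := by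
    rw [abs_mul, abs_mul]
    gcongr
    exacts [(hcM _ (hyl.abs_le_one x)).1, hyl.abs_deriv_fst_le x, abs_deriv_fst_le_jetSize x]
  have hdl : |deriv d (y x) * deriv y x * deriv l x| ≤ M * N * jetSize y l x := by
    rw [abs_mul, abs_mul]
    gcongr
    exacts [(hdM _ (hyl.abs_le_one x)).1, hyl.abs_deriv_fst_le x, abs_deriv_snd_le_jetSize x]
  have hhy : |deriv h (y x) * deriv y x| ≤ M * jetSize y l x := by
    rw [abs_mul]
    gcongr
    exacts [(hhM _ (hyl.abs_le_one x)).1, abs_deriv_fst_le_jetSize x]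
  have hky : |deriv k (y x) * deriv y x| ≤ M * N * jetSize y l x := by
    rw [abs_mul]
    gcongr
    exacts [hyl.abs_deriv_comp_le hkM hk.differentiable_deriv_two hk₀ x,
      abs_deriv_fst_le_jetSize x]
  rw [hyl.deriv_quasilinear hc hd hh hk, neg_mul τ (c (y x) * _ + _), neg_add_eq_sub,
    sub_add_cancel]
  calc _ ≤ _ := abs_linear_combination_le hτ hσ _ _ _ _
    _ ≤ τ * (M * N * jetSize y l x + M * N * jetSize y l x) + σ * (M * jetSize y l x)
        + τ * (M * N * jetSize y l x) := by gcongr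
    _ = (3 * (τ * (M * N)) + σ * M) * jetSize y l x := by ring

/-- The part of `(c(y) w')''` left after removing the top-order term `c(y) w'''`. -/
noncomputable def advectionCommutator (c y w : ℝ → ℝ) (x : ℝ) : ℝ :=
  2 * (deriv c (y x) * deriv y x * deriv (deriv w) x)
    + (deriv c (y x) * deriv (deriv y) x + deriv (deriv c) (y x) * deriv y x ^ 2) * deriv w x

theorem deriv_deriv_advection (hc : ContDiff ℝ 2 c) (hy : ContDiff ℝ 2 y)
    (hw : ContDiff ℝ 2 (deriv w)) (x : ℝ) :
    deriv (deriv fun x => c (y x) * deriv w x) x =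
      c (y x) * deriv (deriv (deriv w)) x + advectionCommutator c y w x := by
  rw [deriv_deriv_mul (f := fun x => c (y x)) (hc.comp hy) hw, advectionCommutator,
    deriv_deriv_comp (fun _ => hc.contDiffAt) hy,
    deriv_comp_apply (fun _ => hc.differentiable two_ne_zero _) (hy.differentiable two_ne_zero)]
  ring

theorem abs_advectionCommutator_le (hyl : SmallPair N y l) (hc : JetBound c M) (x : ℝ)
    (hw : |deriv w x| ≤ N) (hw'' : |deriv (deriv w) x| ≤ jetSize y l x) :
    |advectionCommutator c y w x| ≤ 4 * (M * N) * jetSize y l x := by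
  obtain ⟨hc', hc''⟩ := hc (y x) (hyl.abs_le_one x)
  have hM : 0 ≤ M := (abs_nonneg _).trans hc'
  have hN := hyl.nonneg
  have hy' : |deriv y x| ≤ jetSize y l x := abs_deriv_fst_le_jetSize x
  have hy'' : |deriv (deriv y) x| ≤ jetSize y l x := abs_deriv_deriv_fst_le_jetSize x
  have hJ := (abs_nonneg _).trans hy'
  have h₁ : |deriv c (y x) * deriv y x * deriv (deriv w) x| ≤ M * N * jetSize y l x := by
    rw [abs_mul, abs_mul]
    gcongr
    exact hyl.abs_deriv_fst_le x
  have h₂ : |deriv c (y x) * deriv (deriv y) x * deriv w x| ≤ M * jetSize y l x * N := by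
    rw [abs_mul, abs_mul]
    gcongr
  have h₃ : |deriv (deriv c) (y x) * deriv y x * (deriv y x * deriv w x)|
      ≤ M * jetSize y l x * (1 * N) := by
    rw [abs_mul, abs_mul, abs_mul]
    gcongr
    exact (hyl.abs_deriv_fst_le x).trans hyl.le_one
  have hsplit : advectionCommutator c y w x =
      2 * (deriv c (y x) * deriv y x * deriv (deriv w) x)
      + deriv c (y x) * deriv (deriv y) x * deriv w x
      + deriv (deriv c) (y x) * deriv y x * (deriv y x * deriv w x) := by
    rw [advectionCommutator]; ring
  rw [hsplit, abs_le]
  constructor <;> linarith [abs_le.1 h₁, abs_le.1 h₂, abs_le.1 h₃]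

/-- The part of `(quasilinear τ σ c d h k y l)''` left after removing the transport terms
`-τ (c(y) y''' + d(y) l''')` and the damping term `-σ h'(y) y''`. -/
noncomputable def quasilinearRemainder (τ σ : ℝ) (c d h k y l : ℝ → ℝ) (x : ℝ) : ℝ :=
  -τ * (advectionCommutator c y y x + advectionCommutator d y l x)
    - σ * (deriv (deriv h) (y x) * deriv y x ^ 2)
    + τ * (deriv k (y x) * deriv (deriv y) x + deriv (deriv k) (y x) * deriv y x ^ 2)

theorem deriv_deriv_quasilinear (hyl : SmallPair N y l) (hc : ContDiff ℝ 2 c) (hd : ContDiff ℝ 2 d)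
    (hh : ContDiff ℝ 2 h) (hk : ContDiff ℝ 2 k) (x : ℝ) :
    deriv (deriv (quasilinear τ σ c d h k y l)) x =
      -τ * (c (y x) * deriv (deriv (deriv y)) x + d (y x) * deriv (deriv (deriv l)) x)
      - σ * (deriv h (y x) * deriv (deriv y) x) + quasilinearRemainder τ σ c d h k y l x := by
  have hcy : ContDiff ℝ 2 fun x => c (y x) * deriv y x :=
    (hc.comp hyl.fst_two).mul hyl.contDiff_deriv_fst
  have hdl : ContDiff ℝ 2 fun x => d (y x) * deriv l x :=
    (hd.comp hyl.fst_two).mul hyl.contDiff_deriv_snd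
  have hhy : ContDiff ℝ 2 fun x => h (y x) := hh.comp hyl.fst_two
  have hky : ContDiff ℝ 2 fun x => k (y x) := hk.comp hyl.fst_two
  have hfirst : deriv (quasilinear τ σ c d h k y l) = fun x =>
      -τ * (deriv (fun x => c (y x) * deriv y x) x + deriv (fun x => d (y x) * deriv l x) x)
      - σ * deriv (fun x => h (y x)) x + τ * deriv (fun x => k (y x)) x :=
    funext fun x => deriv_linear_combination (hcy.differentiable two_ne_zero)
      (hdl.differentiable two_ne_zero) (hhy.differentiable two_ne_zero)
      (hky.differentiable two_ne_zero) x
  rw [hfirst, deriv_linear_combination hcy.differentiable_deriv_two hdl.differentiable_deriv_two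
    hhy.differentiable_deriv_two hky.differentiable_deriv_two,
    deriv_deriv_advection hc hyl.fst_two hyl.contDiff_deriv_fst,
    deriv_deriv_advection hd hyl.fst_two hyl.contDiff_deriv_snd,
    deriv_deriv_comp (fun _ => hh.contDiffAt) hyl.fst_two,
    deriv_deriv_comp (fun _ => hk.contDiffAt) hyl.fst_two, quasilinearRemainder]
  ring

theorem abs_quasilinearRemainder_le (hyl : SmallPair N y l) (hσ : 0 ≤ σ) (hστ : σ ≤ τ)
    (hc : JetBound c M) (hd : JetBound d M) (hh : JetBound h M) (hk : JetBound k M)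
    (hk₁ : Differentiable ℝ (deriv k)) (hk₀ : deriv k 0 = 0) (x : ℝ) :
    |quasilinearRemainder τ σ c d h k y l x| ≤ 11 * (τ * (M * N)) * jetSize y l x := by
  obtain ⟨-, hh''⟩ := hh (y x) (hyl.abs_le_one x)
  obtain ⟨-, hk''⟩ := hk (y x) (hyl.abs_le_one x)
  have hM : 0 ≤ M := (abs_nonneg _).trans hk''
  have hτ : 0 ≤ τ := hσ.trans hστ
  have hN := hyl.nonneg
  have : 0 ≤ jetSize y l x := (abs_nonneg _).trans (abs_deriv_fst_le_jetSize x)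
  have hk' := hyl.abs_deriv_comp_le hk hk₁ hk₀ x
  have hquad : ∀ {e : ℝ}, |e| ≤ M → |e * deriv y x ^ 2| ≤ M * (N * jetSize y l x) := fun he => by
    rw [pow_two, abs_mul, abs_mul]
    gcongr
    exacts [hyl.abs_deriv_fst_le x, abs_deriv_fst_le_jetSize x]
  have hlin : |deriv k (y x) * deriv (deriv y) x| ≤ M * N * jetSize y l x := by
    rw [abs_mul]
    gcongr
    exact abs_deriv_deriv_fst_le_jetSize x
  have hcomm₁ := hyl.abs_advectionCommutator_le hc x (hyl.abs_deriv_fst_le x)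
    (abs_deriv_deriv_fst_le_jetSize x)
  have hcomm₂ := hyl.abs_advectionCommutator_le hd x (hyl.abs_deriv_snd_le x)
    (abs_deriv_deriv_snd_le_jetSize x)
  calc |quasilinearRemainder τ σ c d h k y l x|
      ≤ τ * (|advectionCommutator c y y x| + |advectionCommutator d y l x|)
        + σ * |deriv (deriv h) (y x) * deriv y x ^ 2|
        + τ * (|deriv k (y x) * deriv (deriv y) x| + |deriv (deriv k) (y x) * deriv y x ^ 2|) := by
        exact (abs_linear_combination_le hτ hσ _ _ _ _).trans
          (add_le_add_right (mul_le_mul_of_nonneg_left (abs_add_le _ _) hτ) _)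
    _ ≤ τ * (4 * (M * N) * jetSize y l x + 4 * (M * N) * jetSize y l x)
        + τ * (M * (N * jetSize y l x))
        + τ * (M * N * jetSize y l x + M * (N * jetSize y l x)) := by
        gcongr
        exacts [hquad hh'', hquad hk'']
    _ = 11 * (τ * (M * N)) * jetSize y l x := by ring

end SmallPair

/-! ### Symmetric hyperbolic systems with partial damping -/

/-- Coefficients of the symmetric hyperbolic system
`∂ₜy = -τ (a(y) ∂ₓy + b(y) ∂ₓl) - σ h₁(y) + τ h₂(y)`, `∂ₜl = -τ (b(y) ∂ₓy + a(y) ∂ₓl) + τ g(y)`,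
in which only `y` is damped, while `b(0) > 0` couples `l` to `y`. -/
structure DampedSystem where
  (a b g h₁ h₂ : ℝ → ℝ)
  contDiff_a : ContDiff ℝ 2 a
  contDiff_b : ContDiff ℝ 2 b
  contDiff_g : ContDiff ℝ 2 g
  contDiff_h₁ : ContDiff ℝ 2 h₁
  contDiff_h₂ : ContDiff ℝ 2 h₂
  b_zero_pos : 0 < b 0
  deriv_g_zero : deriv g 0 = 0
  deriv_h₂_zero : deriv h₂ 0 = 0
  one_le_deriv_h₁ : ∀ y, 1 ≤ deriv h₁ y

namespace DampedSystem

variable (S : DampedSystem) {M N τ σ : ℝ} {y l : ℝ → ℝ}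

/-- The right-hand side of the equation for `y`. -/
noncomputable def rhsFst (τ σ : ℝ) (y l : ℝ → ℝ) : ℝ → ℝ := quasilinear τ σ S.a S.b S.h₁ S.h₂ y l

/-- The right-hand side of the equation for `l`. -/
noncomputable def rhsSnd (τ : ℝ) (y l : ℝ → ℝ) : ℝ → ℝ := quasilinear τ 0 S.b S.a 0 S.g y l

/-- `M ≥ 1` bounds the first two derivatives of all coefficients on `[-1, 1]`. -/
structure Bounded (M : ℝ) : Prop where
  one_le : 1 ≤ M
  a : JetBound S.a M
  b : JetBound S.b M
  g : JetBound S.g M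
  h₁ : JetBound S.h₁ M
  h₂ : JetBound S.h₂ M

theorem exists_bounded : ∃ M, S.Bounded M := by
  obtain ⟨Ma, ha₀, ha⟩ := JetBound.exists_of_contDiff S.contDiff_a
  obtain ⟨Mb, hb₀, hb⟩ := JetBound.exists_of_contDiff S.contDiff_b
  obtain ⟨Mg, hg₀, hg⟩ := JetBound.exists_of_contDiff S.contDiff_g
  obtain ⟨M₁, h₁₀, h₁⟩ := JetBound.exists_of_contDiff S.contDiff_h₁
  obtain ⟨M₂, h₂₀, h₂⟩ := JetBound.exists_of_contDiff S.contDiff_h₂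
  exact ⟨1 + Ma + Mb + Mg + M₁ + M₂, by linarith, ha.mono (by linarith), hb.mono (by linarith),
    hg.mono (by linarith), h₁.mono (by linarith), h₂.mono (by linarith)⟩

variable {S}

theorem contDiff_rhsFst (hyl : SmallPair N y l) : ContDiff ℝ 2 (S.rhsFst τ σ y l) :=
  hyl.contDiff_quasilinear S.contDiff_a S.contDiff_b S.contDiff_h₁ S.contDiff_h₂

theorem contDiff_rhsSnd (hyl : SmallPair N y l) : ContDiff ℝ 2 (S.rhsSnd τ y l) :=
  hyl.contDiff_quasilinear S.contDiff_b S.contDiff_a contDiff_const S.contDiff_g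

/-- The flux in the energy identity for `(y'', l'')`. -/
noncomputable def energyFlux (S : DampedSystem) (τ : ℝ) (y l : ℝ → ℝ) (x : ℝ) : ℝ :=
  -τ * (S.a (y x) * ((deriv (deriv y) x ^ 2 + deriv (deriv l) x ^ 2) / 2)
    + S.b (y x) * (deriv (deriv y) x * deriv (deriv l) x))

theorem contDiff_energyFlux (hyl : SmallPair N y l) : ContDiff ℝ 1 (S.energyFlux τ y l) := by
  have ha := S.contDiff_a.comp hyl.fst_two |>.of_le one_le_two
  have hb := S.contDiff_b.comp hyl.fst_two |>.of_le one_le_two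
  have hy := hyl.contDiff_deriv_fst.deriv' (n := 1)
  have hl := hyl.contDiff_deriv_snd.deriv' (n := 1)
  exact contDiff_const.mul ((ha.mul (((hy.pow 2).add (hl.pow 2)).div_const 2)).add
    (hb.mul (hy.mul hl)))

theorem deriv_energyFlux (hyl : SmallPair N y l) (x : ℝ) :
    deriv (S.energyFlux τ y l) x =
      -τ * (S.a (y x) * (deriv (deriv y) x * deriv (deriv (deriv y)) x
          + deriv (deriv l) x * deriv (deriv (deriv l)) x)
        + S.b (y x) * (deriv (deriv (deriv y)) x * deriv (deriv l) x
          + deriv (deriv y) x * deriv (deriv (deriv l)) x))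
      - τ * (deriv S.a (y x) * deriv y x * ((deriv (deriv y) x ^ 2 + deriv (deriv l) x ^ 2) / 2)
        + deriv S.b (y x) * deriv y x * (deriv (deriv y) x * deriv (deriv l) x)) := by
  have hy := (hyl.fst_two.differentiable two_ne_zero x).hasDerivAt
  have ha := (S.contDiff_a.differentiable two_ne_zero (y x)).hasDerivAt.comp x hy
  have hb := (S.contDiff_b.differentiable two_ne_zero (y x)).hasDerivAt.comp x hy
  have hP := (hyl.contDiff_deriv_fst.differentiable_deriv_two x).hasDerivAt
  have hQ := (hyl.contDiff_deriv_snd.differentiable_deriv_two x).hasDerivAt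
  have key := ((ha.mul (((hP.pow 2).add (hQ.pow 2)).div_const 2)).add
    (hb.mul (hP.mul hQ))).const_mul (-τ)
  refine key.deriv.trans ?_
  simp only [comp_apply, Pi.add_apply, Pi.pow_apply, Pi.mul_apply]
  push_cast
  ring

theorem energyFlux_periodic (hyl : SmallPair N y l) :
    Periodic (S.energyFlux τ y l) (2 * Real.pi) := fun x => by
  simp only [energyFlux, hyl.periodic_fst x, periodic_deriv (periodic_deriv hyl.periodic_fst) x,
    periodic_deriv (periodic_deriv hyl.periodic_snd) x]

theorem dissipation_le (hS : S.Bounded M) (hyl : SmallPair N y l) (hσ : 0 ≤ σ) (hστ : σ ≤ τ)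
    (x : ℝ) :
    deriv (deriv y) x * deriv (deriv (S.rhsFst τ σ y l)) x
        + deriv (deriv l) x * deriv (deriv (S.rhsSnd τ y l)) x
      ≤ deriv (S.energyFlux τ y l) x
        + (-σ * deriv (deriv y) x ^ 2 + 24 * (τ * (M * N)) * jetSize y l x ^ 2) := by
  have hM : 0 ≤ M := zero_le_one.trans hS.one_le
  have hτ : 0 ≤ τ := hσ.trans hστ
  have h₀ : ContDiff ℝ 2 (0 : ℝ → ℝ) := contDiff_const
  rw [rhsFst, rhsSnd, hyl.deriv_deriv_quasilinear S.contDiff_a S.contDiff_b S.contDiff_h₁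
    S.contDiff_h₂, hyl.deriv_deriv_quasilinear S.contDiff_b S.contDiff_a h₀ S.contDiff_g,
    deriv_energyFlux hyl]
  have hP : |deriv (deriv y) x| ≤ jetSize y l x := abs_deriv_deriv_fst_le_jetSize x
  have hQ : |deriv (deriv l) x| ≤ jetSize y l x := abs_deriv_deriv_snd_le_jetSize x
  have hR₁ := abs_mul_le hP <| hyl.abs_quasilinearRemainder_le hσ hστ hS.a hS.b hS.h₁ hS.h₂
    S.contDiff_h₂.differentiable_deriv_two S.deriv_h₂_zero x
  have hR₂ := abs_mul_le hQ <| hyl.abs_quasilinearRemainder_le le_rfl hτ hS.b hS.a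
    (JetBound.zero hM) hS.g S.contDiff_g.differentiable_deriv_two S.deriv_g_zero x
  have hy' := hyl.abs_deriv_fst_le x
  have ha := abs_mul_le (abs_mul_le (hS.a _ (hyl.abs_le_one x)).1 hy')
    (show |(deriv (deriv y) x ^ 2 + deriv (deriv l) x ^ 2) / 2| ≤ jetSize y l x ^ 2 by
      rw [abs_of_nonneg (by positivity)]
      linarith [sq_le_sq.2 (hP.trans (le_abs_self _)), sq_le_sq.2 (hQ.trans (le_abs_self _))])
  have hb := abs_mul_le (abs_mul_le (hS.b _ (hyl.abs_le_one x)).1 hy') (abs_mul_le hP hQ)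
  have hτa := mul_le_mul_of_nonneg_left (le_of_abs_le ha) hτ
  have hτb := mul_le_mul_of_nonneg_left (le_of_abs_le hb) hτ
  have hdamp := mul_nonneg (mul_nonneg hσ (sub_nonneg.2 (S.one_le_deriv_h₁ (y x))))
    (sq_nonneg (deriv (deriv y) x))
  linarith [le_of_abs_le hR₁, le_of_abs_le hR₂]

theorem integral_dissipation_le (hS : S.Bounded M) (hyl : SmallPair N y l) (hσ : 0 ≤ σ)
    (hστ : σ ≤ τ) :
    ∫ x in (0:ℝ)..(2 * Real.pi), (deriv (deriv y) x * deriv (deriv (S.rhsFst τ σ y l)) x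
        + deriv (deriv l) x * deriv (deriv (S.rhsSnd τ y l)) x)
      ≤ -σ * secondEnergy y + 3936 * (τ * (M * N)) * (secondEnergy y + secondEnergy l) := by
  have hM : 0 ≤ M := zero_le_one.trans hS.one_le
  have hN := hyl.nonneg
  have hτ : 0 ≤ τ := hσ.trans hστ
  have hy := hyl.contDiff_deriv_fst.continuous_deriv one_le_two
  have hl := hyl.contDiff_deriv_snd.continuous_deriv one_le_two
  have hJ := hyl.continuous_jetSize
  have hU := (contDiff_rhsFst (S := S) (τ := τ) (σ := σ) hyl).deriv'.continuous_deriv_one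
  have hV := (contDiff_rhsSnd (S := S) (τ := τ) hyl).deriv'.continuous_deriv_one
  calc _ ≤ ∫ x in (0:ℝ)..(2 * Real.pi),
        (-σ * deriv (deriv y) x ^ 2 + 24 * (τ * (M * N)) * jetSize y l x ^ 2) :=
        integral_le_of_le_deriv_add Real.two_pi_pos.le (by fun_prop) (by fun_prop)
          (contDiff_energyFlux hyl) (energyFlux_periodic hyl) (dissipation_le hS hyl hσ hστ)
    _ = -σ * secondEnergy y
        + 24 * (τ * (M * N)) * ∫ x in (0:ℝ)..(2 * Real.pi), jetSize y l x ^ 2 := by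
        rw [intervalIntegral.integral_add, intervalIntegral.integral_const_mul,
          intervalIntegral.integral_const_mul, secondEnergy] <;>
        exact Continuous.intervalIntegrable (by fun_prop) _ _
    _ ≤ -σ * secondEnergy y
        + 24 * (τ * (M * N)) * (164 * (secondEnergy y + secondEnergy l)) := by
        gcongr
        exact hyl.integral_sq_jetSize_le
    _ = _ := by ring

theorem neg_compensator_le (hS : S.Bounded M) (hyl : SmallPair N y l) (hσ : 0 ≤ σ) (hτ : 0 ≤ τ)
    (x : ℝ) :
    -(deriv (deriv (S.rhsFst τ σ y l)) x * deriv l x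
        + deriv (deriv y) x * deriv (S.rhsSnd τ y l) x)
      ≤ deriv (fun x => -(deriv (S.rhsFst τ σ y l) x * deriv l x)) x
        + (-(τ * S.b 0) * (deriv (deriv l) x ^ 2 - deriv (deriv y) x ^ 2)
          + (7 * (τ * (M * N)) + σ * M) * jetSize y l x ^ 2) := by
  have hM : 0 ≤ M := zero_le_one.trans hS.one_le
  have hP : |deriv (deriv y) x| ≤ jetSize y l x := abs_deriv_deriv_fst_le_jetSize x
  have hQ : |deriv (deriv l) x| ≤ jetSize y l x := abs_deriv_deriv_snd_le_jetSize x
  have hflux : deriv (fun x => -(deriv (S.rhsFst τ σ y l) x * deriv l x)) x =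
      -(deriv (deriv (S.rhsFst τ σ y l)) x * deriv l x
        + deriv (S.rhsFst τ σ y l) x * deriv (deriv l) x) :=
    (((contDiff_rhsFst hyl).differentiable_deriv_two x).hasDerivAt.mul
      (hyl.snd_two.differentiable_deriv_two x).hasDerivAt).neg.deriv
  have hU := abs_mul_le hQ <| hyl.abs_deriv_quasilinear_add_le hσ hτ S.contDiff_a S.contDiff_b
    S.contDiff_h₁ S.contDiff_h₂ hS.a hS.b hS.h₁ hS.h₂ S.deriv_h₂_zero x
  have hV := abs_mul_le hP <| hyl.abs_deriv_quasilinear_add_le le_rfl hτ S.contDiff_b S.contDiff_a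
    (h := 0) contDiff_const S.contDiff_g hS.b hS.a (JetBound.zero hM) hS.g S.deriv_g_zero x
  have hb : |S.b (y x) - S.b 0| ≤ M * N :=
    (abs_sub_zero_le (S.contDiff_b.differentiable two_ne_zero) (fun z hz => (hS.b z hz).1)
      (hyl.abs_le_one x)).trans (mul_le_mul_of_nonneg_left (hyl.abs_fst_le x) hM)
  have hsq : |deriv (deriv l) x ^ 2 - deriv (deriv y) x ^ 2| ≤ jetSize y l x ^ 2 :=
    abs_sub_le_of_nonneg_of_le (sq_nonneg _) (sq_le_sq.2 (hQ.trans (le_abs_self _)))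
      (sq_nonneg _) (sq_le_sq.2 (hP.trans (le_abs_self _)))
  have hτb := mul_le_mul_of_nonneg_left (neg_le_of_abs_le (abs_mul_le hb hsq)) hτ
  rw [hflux]
  unfold rhsFst rhsSnd
  linarith [le_of_abs_le hU, neg_le_of_abs_le hV]

theorem integral_neg_compensator_le (hS : S.Bounded M) (hyl : SmallPair N y l) (hσ : 0 ≤ σ)
    (hτ : 0 ≤ τ) :
    ∫ x in (0:ℝ)..(2 * Real.pi), -(deriv (deriv (S.rhsFst τ σ y l)) x * deriv l x
        + deriv (deriv y) x * deriv (S.rhsSnd τ y l) x)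
      ≤ -(τ * S.b 0) * (secondEnergy l - secondEnergy y)
        + 164 * (7 * (τ * (M * N)) + σ * M) * (secondEnergy y + secondEnergy l) := by
  have hM : 0 ≤ M := zero_le_one.trans hS.one_le
  have hN := hyl.nonneg
  have hy := hyl.contDiff_deriv_fst.continuous_deriv one_le_two
  have hl := hyl.contDiff_deriv_snd.continuous_deriv one_le_two
  have hl' := hyl.contDiff_deriv_snd
  have hJ := hyl.continuous_jetSize
  have hU := (contDiff_rhsFst (S := S) (τ := τ) (σ := σ) hyl).deriv' (n := 1)
  have := hU.continuous_deriv_one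
  have hV := (contDiff_rhsSnd (S := S) (τ := τ) hyl).continuous_deriv one_le_two
  calc _ ≤ ∫ x in (0:ℝ)..(2 * Real.pi),
        (-(τ * S.b 0) * (deriv (deriv l) x ^ 2 - deriv (deriv y) x ^ 2)
          + (7 * (τ * (M * N)) + σ * M) * jetSize y l x ^ 2) :=
        integral_le_of_le_deriv_add Real.two_pi_pos.le (by fun_prop) (by fun_prop)
          (hU.mul (hl'.of_le one_le_two)).neg
          (fun x => by simp only [rhsFst, periodic_deriv (hyl.quasilinear_periodic) x,
            periodic_deriv hyl.periodic_snd x])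
          (neg_compensator_le hS hyl hσ hτ)
    _ = -(τ * S.b 0) * (secondEnergy l - secondEnergy y)
        + (7 * (τ * (M * N)) + σ * M) * ∫ x in (0:ℝ)..(2 * Real.pi), jetSize y l x ^ 2 := by
        rw [intervalIntegral.integral_add, intervalIntegral.integral_const_mul,
          intervalIntegral.integral_const_mul, intervalIntegral.integral_sub, secondEnergy,
          secondEnergy] <;>
        exact Continuous.intervalIntegrable (by fun_prop) _ _
    _ ≤ -(τ * S.b 0) * (secondEnergy l - secondEnergy y)
        + (7 * (τ * (M * N)) + σ * M) * (164 * (secondEnergy y + secondEnergy l)) := by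
        gcongr
        exact hyl.integral_sq_jetSize_le
    _ = _ := by ring

end DampedSystem

/-! ### A scalar hypocoercivity estimate -/

theorem le_mul_exp_of_deriv_le {F F' G G' : ℝ → ℝ} {a T t : ℝ} (hF : ContinuousOn F (Icc a T))
    (hG : ContinuousOn G (Icc a T)) (hF' : ∀ t ∈ Ioo a T, HasDerivAt F (F' t) t)
    (hG' : ∀ t ∈ Ioo a T, HasDerivAt G (G' t) t) (hle : ∀ t ∈ Ioo a T, F' t ≤ G' t * F t)
    (ht : t ∈ Icc a T) : F t ≤ F a * Real.exp (G t - G a) := by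
  have hderiv : ∀ t ∈ Ioo a T, HasDerivAt (fun t => F t * Real.exp (-G t))
      ((F' t - G' t * F t) * Real.exp (-G t)) t := fun t ht =>
    ((hF' t ht).mul (hG' t ht).neg.exp).congr_deriv (by simp only [Pi.neg_apply]; ring)
  have hanti : AntitoneOn (fun t => F t * Real.exp (-G t)) (Icc a T) := by
    refine antitoneOn_of_deriv_nonpos (convex_Icc a T) (hF.mul hG.neg.rexp) ?_ ?_ <;>
      rw [interior_Icc] <;> intro t ht
    · exact (hderiv t ht).differentiableAt.differentiableWithinAt
    · rw [(hderiv t ht).deriv]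
      exact mul_nonpos_of_nonpos_of_nonneg (sub_nonpos.2 (hle t ht)) (Real.exp_pos _).le
  have h := hanti (left_mem_Icc.2 (ht.1.trans ht.2)) ht ht.1
  calc F t = F t * Real.exp (-G t) * Real.exp (G t) := by
        rw [mul_assoc, ← Real.exp_add, neg_add_cancel, Real.exp_zero, mul_one]
    _ ≤ F a * Real.exp (-G a) * Real.exp (G t) := by gcongr
    _ = F a * Real.exp (G t - G a) := by rw [mul_assoc, ← Real.exp_add, neg_add_eq_sub]

/-- The weight `c t^α / (t + T₀)` given to the cross term `∫ y'' l'` in the modified energy. -/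
noncomputable def compensatorWeight (c α T₀ t : ℝ) : ℝ := c * (t ^ α / (t + T₀))

section CompensatorWeight

variable {c α T₀ t : ℝ}

theorem compensatorWeight_nonneg (hc : 0 ≤ c) (hT₀ : 0 ≤ T₀) (ht : 0 ≤ t) :
    0 ≤ compensatorWeight c α T₀ t := by
  unfold compensatorWeight; positivity

theorem compensatorWeight_le (hc : 0 ≤ c) (hα0 : 0 ≤ α) (hα1 : α ≤ 1) (hT₀ : 0 < T₀) (ht : 0 ≤ t) :
    compensatorWeight c α T₀ t ≤ c * T₀ ^ (α - 1) := by
  have htT : 0 < t + T₀ := by linarith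
  refine mul_le_mul_of_nonneg_left ?_ hc
  calc t ^ α / (t + T₀) ≤ (t + T₀) ^ α / (t + T₀) := by gcongr; linarith
    _ = (t + T₀) ^ (α - 1) := (Real.rpow_sub_one htT.ne' α).symm
    _ ≤ T₀ ^ (α - 1) := Real.rpow_le_rpow_of_nonpos hT₀ (by linarith) (by linarith)

theorem exists_compensatorWeight_le {η : ℝ} (hc : 0 ≤ c) (hα0 : 0 ≤ α) (hα1 : α < 1) (hη : 0 < η) :
    ∃ T₀, 0 < T₀ ∧ ∀ t, 0 ≤ t → compensatorWeight c α T₀ t ≤ η := by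
  have hlim : Tendsto (fun T₀ : ℝ => c * T₀ ^ (-(1 - α))) atTop (𝓝 (c * 0)) :=
    (tendsto_rpow_neg_atTop (sub_pos.2 hα1)).const_mul c
  rw [mul_zero] at hlim
  obtain ⟨T₀, hT₀η, hT₀⟩ := ((hlim.eventually_le_const hη).and (eventually_gt_atTop 0)).exists
  rw [neg_sub] at hT₀η
  exact ⟨T₀, hT₀, fun t ht => (compensatorWeight_le hc hα0 hα1.le hT₀ ht).trans hT₀η⟩

theorem compensatorWeight_div_le (hc : 0 ≤ c) (hT₀ : 0 ≤ T₀) (ht : 0 < t) :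
    compensatorWeight c α T₀ t / t ≤ c * t ^ (α - 2) := by
  have h : t ^ (α - 2) = t ^ α / t / t := by
    rw [show α - 2 = α - 1 - 1 by ring, Real.rpow_sub_one ht.ne', Real.rpow_sub_one ht.ne']
  rw [h, compensatorWeight, mul_div_assoc]
  gcongr
  linarith

theorem compensatorWeight_mul_rpow_neg (hT₀ : 0 ≤ T₀) (ht : 0 < t) :
    compensatorWeight c α T₀ t * t ^ (-α) = c / (t + T₀) := by
  have := Real.rpow_pos_of_pos ht α
  rw [compensatorWeight, Real.rpow_neg ht.le]
  field_simp

theorem hasDerivAt_compensatorWeight (hT₀ : 0 ≤ T₀) (ht : 0 < t) :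
    HasDerivAt (compensatorWeight c α T₀)
      (compensatorWeight c α T₀ t * (α / t - 1 / (t + T₀))) t := by
  have htT : t + T₀ ≠ 0 := by linarith
  refine (((Real.hasDerivAt_rpow_const (p := α) (Or.inl ht.ne')).div
    ((hasDerivAt_id t).add_const T₀) htT).const_mul c).congr_deriv ?_
  rw [compensatorWeight, id, Real.rpow_sub_one ht.ne']
  field_simp

theorem abs_deriv_compensatorWeight_le (hc : 0 ≤ c) (hα0 : 0 ≤ α) (hα1 : α ≤ 1) (hT₀ : 0 ≤ T₀)
    (ht : 0 < t) :
    |compensatorWeight c α T₀ t * (α / t - 1 / (t + T₀))| ≤ compensatorWeight c α T₀ t / t := by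
  have hw : 0 ≤ compensatorWeight c α T₀ t := compensatorWeight_nonneg hc hT₀ ht.le
  rw [abs_mul, abs_of_nonneg hw, div_eq_mul_one_div (compensatorWeight c α T₀ t)]
  refine mul_le_mul_of_nonneg_left (abs_sub_le_of_nonneg_of_le ?_ ?_ ?_ ?_) hw
  · positivity
  · gcongr
  · positivity
  · gcongr; linarith

end CompensatorWeight

/-- An energy `J` whose part `P` alone is damped, together with a compensator `X` whose growth
controls the remaining part `J - P`. -/
structure HypocoerciveEnergy (α β s B μ T : ℝ) (J P X : ℝ → ℝ) : Prop where
  continuousOn_energy : ContinuousOn J (Icc 1 T)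
  continuousOn_compensator : ContinuousOn X (Icc 1 T)
  damped_nonneg : ∀ t ∈ Icc 1 T, 0 ≤ P t
  abs_compensator_le : ∀ t ∈ Icc 1 T, |X t| ≤ B * J t
  deriv_energy_le : ∀ t ∈ Ioo 1 T, ∃ J', HasDerivAt J J' t ∧
    J' ≤ -(2 * β / t) * P t + B * t ^ (-μ) * J t
  le_deriv_compensator : ∀ t ∈ Ioo 1 T, ∃ X', HasDerivAt X X' t ∧
    s * t ^ (-α) * (J t - 2 * P t) - B * (t ^ (-μ) + 1 / t) * J t ≤ X'

namespace HypocoerciveEnergy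

variable {α β s B μ T T₀ : ℝ} {J P X : ℝ → ℝ}

/-- The modified energy `J - A X` with `A` the compensator weight. -/
noncomputable def modifiedEnergy (α c T₀ : ℝ) (J X : ℝ → ℝ) (t : ℝ) : ℝ :=
  J t - compensatorWeight c α T₀ t * X t

theorem le_two_mul_sub {A x j : ℝ} (hA : 0 ≤ A) (hB : 0 < B) (hAB : A ≤ 1 / (2 * B))
    (hx : |x| ≤ B * j) : j ≤ 2 * (j - A * x) ∧ 2 * (j - A * x) ≤ 3 * j := by
  have hAx : |A * x| ≤ j / 2 := by
    calc |A * x| ≤ 1 / (2 * B) * (B * j) := abs_mul_le (by rwa [abs_of_nonneg hA]) hx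
      _ = j / 2 := by field_simp
  obtain ⟨h₁, h₂⟩ := abs_le.1 hAx
  constructor <;> linarith

/-- The rate `C₁` in the differential inequality `F' ≤ (-β / (t + T₀) + C₁ t^(-μ)) F` satisfied by
the modified energy `F`. -/
noncomputable def errorRate (B β c : ℝ) : ℝ := B * (3 + 2 * (2 + β) * c)

theorem modifiedEnergy_deriv_le {t A A' p j x j' x' : ℝ} (hβ : 0 ≤ β) (hs : 0 < s) (hB : 1 ≤ B)
    (ht : 0 < t) (hT₀ : 0 ≤ T₀) (hA : 0 ≤ A) (hAB : A ≤ 1 / (2 * B)) (hA' : |A'| ≤ A / t)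
    (hAt : A / t ≤ β / s * t ^ (-μ)) (hAα : A * t ^ (-α) = β / s / (t + T₀)) (hp : 0 ≤ p)
    (hx : |x| ≤ B * j) (hj' : j' ≤ -(2 * β / t) * p + B * t ^ (-μ) * j)
    (hx' : s * t ^ (-α) * (j - 2 * p) - B * (t ^ (-μ) + 1 / t) * j ≤ x') :
    j' - (A' * x + A * x') ≤
      (-β / (t + T₀) + errorRate B β (β / s) * t ^ (-μ)) * (j - A * x) := by
  have : 0 < t + T₀ := by linarith
  have hm : 0 ≤ t ^ (-μ) := Real.rpow_nonneg ht.le _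
  obtain ⟨hlow, -⟩ := le_two_mul_sub hA (by linarith) hAB hx
  have hA'x : -(A' * x) ≤ A / t * (B * j) := neg_le.1 (neg_le_of_abs_le (abs_mul_le hA' hx))
  have hAx' : -(A * x') ≤ -(β / (t + T₀) * (j - 2 * p)) + (A * t ^ (-μ) + A / t) * (B * j) := by
    have h := mul_le_mul_of_nonneg_left hx' hA
    have hcoef : A * (s * t ^ (-α) * (j - 2 * p)) = β / (t + T₀) * (j - 2 * p) := by
      rw [show A * (s * t ^ (-α) * (j - 2 * p)) = A * t ^ (-α) * s * (j - 2 * p) by ring, hAα]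
      field_simp
    have : A * (B * (t ^ (-μ) + 1 / t) * j) = (A * t ^ (-μ) + A / t) * (B * j) := by ring
    linarith
  have hβT : β / (t + T₀) ≤ β / t := by gcongr; linarith
  have hdamp : β / (t + T₀) * p ≤ β / t * p := by gcongr
  have hcross : -(β / (t + T₀) * (A * x)) ≤ β * (A / t) * (B * j) := by
    have h := abs_mul_le (show |β / (t + T₀) * A| ≤ β / t * A by
      rw [abs_of_nonneg (by positivity)]; gcongr) hx
    have : β / t * A * (B * j) = β * (A / t) * (B * j) := by ring
    linarith [neg_le_of_abs_le h]
  have hcoef : t ^ (-μ) + A * t ^ (-μ) + (2 + β) * (A / t)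
      ≤ (3 / 2 + (2 + β) * (β / s)) * t ^ (-μ) := by
    have hA1 : A ≤ 1 / 2 := hAB.trans (by gcongr; linarith)
    linarith [mul_le_mul_of_nonneg_right hA1 hm,
      mul_le_mul_of_nonneg_left hAt (show 0 ≤ 2 + β by linarith)]
  have hBj : 0 ≤ B * j := (abs_nonneg x).trans hx
  calc j' - (A' * x + A * x')
      ≤ -(β / (t + T₀)) * (j - A * x)
        + (t ^ (-μ) + A * t ^ (-μ) + (2 + β) * (A / t)) * (B * j) := by
        linarith [show 2 * β / t * p = 2 * (β / t * p) by ring]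
    _ ≤ -(β / (t + T₀)) * (j - A * x)
        + (3 / 2 + (2 + β) * (β / s)) * t ^ (-μ) * (B * (2 * (j - A * x))) := by
        gcongr
    _ = _ := by rw [errorRate]; ring

/-- A primitive of `-β / (t + T₀) + C₁ t^(-μ)`. -/
noncomputable def gronwallExponent (β T₀ C₁ μ t : ℝ) : ℝ :=
  -β * Real.log (t + T₀) - C₁ / (μ - 1) * t ^ (1 - μ)

theorem hasDerivAt_gronwallExponent {C₁ t : ℝ} (hμ : 1 < μ) (hT₀ : 0 ≤ T₀) (ht : 0 < t) :
    HasDerivAt (gronwallExponent β T₀ C₁ μ) (-β / (t + T₀) + C₁ * t ^ (-μ)) t := by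
  have htT : t + T₀ ≠ 0 := by linarith
  have hμ' : μ - 1 ≠ 0 := by linarith
  refine (((((hasDerivAt_id t).add_const T₀).log htT).const_mul (-β)).sub
    ((Real.hasDerivAt_rpow_const (p := 1 - μ) (Or.inl ht.ne')).const_mul
      (C₁ / (μ - 1)))).congr_deriv ?_
  rw [show 1 - μ - 1 = -μ by ring, id]
  field_simp
  ring

theorem exp_gronwallExponent_sub_le {C₁ t : ℝ} (hβ : 0 ≤ β) (hC₁ : 0 ≤ C₁) (hμ : 1 < μ)
    (hT₀ : 0 ≤ T₀) (ht : 0 < t) :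
    Real.exp (gronwallExponent β T₀ C₁ μ t - gronwallExponent β T₀ C₁ μ 1)
      ≤ Real.exp (β * Real.log (1 + T₀) + C₁ / (μ - 1)) * t ^ (-β) := by
  rw [Real.rpow_def_of_pos ht, ← Real.exp_add]
  refine Real.exp_le_exp.2 ?_
  have hlog : β * Real.log t ≤ β * Real.log (t + T₀) := by gcongr; linarith
  have htail : 0 ≤ C₁ / (μ - 1) * t ^ (1 - μ) := by
    have := sub_pos.2 hμ
    positivity
  simp only [gronwallExponent, Real.one_rpow]
  linarith

theorem modifiedEnergy_le (h : HypocoerciveEnergy α β s B μ T J P X) (hα0 : 0 ≤ α) (hα1 : α ≤ 1)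
    (hβ : 0 ≤ β) (hs : 0 < s) (hB : 1 ≤ B) (hμ : 1 < μ) (hμα : μ ≤ 2 - α) (hT₀ : 0 ≤ T₀)
    (hA : ∀ t, 0 ≤ t → compensatorWeight (β / s) α T₀ t ≤ 1 / (2 * B)) {t : ℝ} (ht : t ∈ Icc 1 T) :
    modifiedEnergy α (β / s) T₀ J X t ≤ modifiedEnergy α (β / s) T₀ J X 1 *
      Real.exp (gronwallExponent β T₀ (errorRate B β (β / s)) μ t
        - gronwallExponent β T₀ (errorRate B β (β / s)) μ 1) := by
  have hc : 0 ≤ β / s := by positivity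
  have hpos : ∀ {t : ℝ}, 1 ≤ t → 0 < t := fun ht => one_pos.trans_le ht
  choose! J' hJ' hJ'le using h.deriv_energy_le
  choose! X' hX' hX'le using h.le_deriv_compensator
  have hG : ∀ t, 0 < t → HasDerivAt (gronwallExponent β T₀ (errorRate B β (β / s)) μ)
      (-β / (t + T₀) + errorRate B β (β / s) * t ^ (-μ)) t := fun t =>
    hasDerivAt_gronwallExponent hμ hT₀
  have hw : ∀ t, 0 < t → HasDerivAt (compensatorWeight (β / s) α T₀) _ t := fun t =>
    hasDerivAt_compensatorWeight hT₀
  refine le_mul_exp_of_deriv_le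
    (h.continuousOn_energy.sub (ContinuousOn.mul
      (fun t ht => (hw t (hpos ht.1)).continuousAt.continuousWithinAt) h.continuousOn_compensator))
    (fun t ht => (hG t (hpos ht.1)).continuousAt.continuousWithinAt)
    (fun t ht => (hJ' t ht).sub ((hw t (hpos ht.1.le)).mul (hX' t ht)))
    (fun t ht => hG t (hpos ht.1.le)) (fun t ht => ?_) ht
  have ht' := Ioo_subset_Icc_self ht
  have ht0 := hpos ht'.1
  have hAt : compensatorWeight (β / s) α T₀ t / t ≤ β / s * t ^ (-μ) :=
    (compensatorWeight_div_le hc hT₀ ht0).trans (mul_le_mul_of_nonneg_left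
      (Real.rpow_le_rpow_of_exponent_le ht'.1 (by linarith)) hc)
  exact modifiedEnergy_deriv_le hβ hs hB ht0 hT₀ (compensatorWeight_nonneg hc hT₀ ht0.le)
    (hA t ht0.le) (abs_deriv_compensatorWeight_le hc hα0 hα1 hT₀ ht0) hAt
    (compensatorWeight_mul_rpow_neg hT₀ ht0) (h.damped_nonneg t ht') (h.abs_compensator_le t ht')
    (hJ'le t ht) (hX'le t ht)

theorem exists_decay (hα0 : 0 ≤ α) (hα1 : α < 1) (hβ : 0 ≤ β) (hs : 0 < s) (hB : 1 ≤ B)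
    (hμ : 1 < μ) (hμα : μ ≤ 2 - α) :
    ∃ C, 0 < C ∧ ∀ {T : ℝ} {J P X : ℝ → ℝ}, HypocoerciveEnergy α β s B μ T J P X →
      ∀ t ∈ Icc 1 T, J t ≤ C * J 1 * t ^ (-β) := by
  have hc : 0 ≤ β / s := by positivity
  obtain ⟨T₀, hT₀, hA⟩ := exists_compensatorWeight_le hc hα0 hα1
    (show 0 < 1 / (2 * B) by positivity)
  have hC₁ : 0 ≤ errorRate B β (β / s) := by unfold errorRate; positivity
  set E := Real.exp (β * Real.log (1 + T₀) + errorRate B β (β / s) / (μ - 1))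
  refine ⟨3 * E, by positivity, fun {T J P X} h t ht => ?_⟩
  have hF : ∀ t ∈ Icc 1 T, J t ≤ 2 * modifiedEnergy α (β / s) T₀ J X t ∧
      2 * modifiedEnergy α (β / s) T₀ J X t ≤ 3 * J t := fun t ht =>
    have ht0 : 0 ≤ t := zero_le_one.trans ht.1
    le_two_mul_sub (compensatorWeight_nonneg hc hT₀.le ht0) (by linarith) (hA t ht0)
      (h.abs_compensator_le t ht)
  have h1 : (1 : ℝ) ∈ Icc 1 T := left_mem_Icc.2 (ht.1.trans ht.2)
  have hJ1 : 0 ≤ J 1 := nonneg_of_mul_nonneg_right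
    ((abs_nonneg _).trans (h.abs_compensator_le 1 h1)) (by linarith)
  have hF1 : 0 ≤ modifiedEnergy α (β / s) T₀ J X 1 := by linarith [(hF 1 h1).1]
  calc J t ≤ 2 * modifiedEnergy α (β / s) T₀ J X t := (hF t ht).1
    _ ≤ 2 * (modifiedEnergy α (β / s) T₀ J X 1 * (E * t ^ (-β))) := by
        have hexp := exp_gronwallExponent_sub_le hβ hC₁ hμ hT₀.le (zero_lt_one.trans_le ht.1)
        grw [h.modifiedEnergy_le hα0 hα1.le hβ hs hB hμ hμα hT₀.le hA ht, hexp]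
    _ = 2 * modifiedEnergy α (β / s) T₀ J X 1 * (E * t ^ (-β)) := by ring
    _ ≤ 3 * J 1 * (E * t ^ (-β)) := mul_le_mul_of_nonneg_right (hF 1 h1).2
        (mul_nonneg (Real.exp_pos _).le (Real.rpow_nonneg (zero_le_one.trans ht.1) _))
    _ = 3 * E * J 1 * t ^ (-β) := by ring

end HypocoerciveEnergy

/-! ### Decay of the second-order energy -/

namespace SlabContDiff

variable {S : Set ℝ} {f g : ℝ → ℝ → ℝ} {t : ℝ}

theorem hasDerivAt_integral_mul (hf : SlabContDiff 1 S f) (hg : SlabContDiff 1 S g) (ht : S ∈ 𝓝 t)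
    (a b : ℝ) : HasDerivAt (fun t => ∫ x in a..b, f t x * g t x)
      (∫ x in a..b, (pderivT f t x * g t x + f t x * pderivT g t x)) t := by
  refine ((hf.mul hg).hasDerivAt_integral ht a b).congr_deriv ?_
  exact intervalIntegral.integral_congr fun x _ =>
    ((hf.hasDerivAt_time ht x).mul (hg.hasDerivAt_time ht x)).deriv

theorem continuousOn_secondEnergy (hS : UniqueDiffOn ℝ S) (hf : SlabContDiff 2 S f) :
    ContinuousOn (fun t => secondEnergy (f t)) S :=
  have hf₁ : SlabContDiff 1 S (pderivX f) := partialX hS (by norm_num; exact hf)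
  have hf₂ : SlabContDiff 0 S (pderivX (pderivX f)) := partialX hS (by rwa [zero_add])
  (hf₂.pow 2).continuousOn_integral 0 (2 * Real.pi)

theorem hasDerivAt_secondEnergy (hS : UniqueDiffOn ℝ S) (hf : SlabContDiff 3 S f) (ht : S ∈ 𝓝 t) :
    HasDerivAt (fun t => secondEnergy (f t))
      (2 * ∫ x in 0..2 * Real.pi, deriv (deriv (f t)) x * deriv (deriv (pderivT f t)) x) t := by
  have hf₁ : SlabContDiff 2 S (pderivX f) := partialX hS (by norm_num; exact hf)
  have hf₂ : SlabContDiff 1 S (pderivX (pderivX f)) := partialX hS (by norm_num; exact hf₁)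
  have h := hf₂.hasDerivAt_integral_mul hf₂ ht 0 (2 * Real.pi)
  simp only [hf.pderivT_pderivX_pderivX hS ht, ← sq] at h
  refine h.congr_deriv ?_
  rw [← intervalIntegral.integral_const_mul]
  exact intervalIntegral.integral_congr fun x _ => by
    simp only [pderivX]
    ring

end SlabContDiff

/-- The compensator `∫ y'' l'` of the hypocoercivity argument. -/
noncomputable def crossEnergy (y l : ℝ → ℝ) : ℝ :=
  ∫ x in 0..2 * Real.pi, deriv (deriv y) x * deriv l x

theorem abs_crossEnergy_le {y l : ℝ → ℝ} (hy : ContDiff ℝ 2 y) (hl : ContDiff ℝ 2 l)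
    (hper : Periodic l (2 * Real.pi)) :
    |crossEnergy y l| ≤ 20 * (secondEnergy y + secondEnergy l) := by
  have hy₂ : Continuous (deriv (deriv y)) := (hy.deriv' (n := 1)).continuous_deriv le_rfl
  have hl₁ : Continuous (deriv l) := hl.continuous_deriv one_le_two
  have hint : |crossEnergy y l| ≤
      ∫ x in 0..2 * Real.pi, (deriv (deriv y) x ^ 2 + deriv l x ^ 2) / 2 :=
    (intervalIntegral.abs_integral_le_integral_abs Real.two_pi_pos.le).trans <|
      intervalIntegral.integral_mono_on Real.two_pi_pos.le
        ((hy₂.mul hl₁).abs.intervalIntegrable _ _)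
        ((((hy₂.pow 2).add (hl₁.pow 2)).div_const 2).intervalIntegrable _ _) fun x _ => by
          rw [abs_le]
          constructor <;>
            nlinarith [sq_nonneg (deriv (deriv y) x + deriv l x),
              sq_nonneg (deriv (deriv y) x - deriv l x)]
  rw [intervalIntegral.integral_div, intervalIntegral.integral_add] at hint
  rotate_left
  · exact (hy₂.pow 2).intervalIntegrable _ _
  · exact (hl₁.pow 2).intervalIntegrable _ _
  have hpoincare := integral_sq_deriv_le_secondEnergy hl hper
  have : (∫ x in 0..2 * Real.pi, deriv (deriv y) x ^ 2) = secondEnergy y := rfl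
  linarith [secondEnergy_nonneg y]

namespace SlabContDiff

variable {S : Set ℝ} {f g : ℝ → ℝ → ℝ} {t : ℝ}

theorem continuousOn_crossEnergy (hS : UniqueDiffOn ℝ S) (hf : SlabContDiff 2 S f)
    (hg : SlabContDiff 2 S g) : ContinuousOn (fun t => crossEnergy (f t) (g t)) S :=
  have hf₁ : SlabContDiff 1 S (pderivX f) := partialX hS (by norm_num; exact hf)
  have hf₂ : SlabContDiff 0 S (pderivX (pderivX f)) := partialX hS (by rwa [zero_add])
  have hg₁ : SlabContDiff 1 S (pderivX g) := partialX hS (by norm_num; exact hg)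
  (hf₂.mul (hg₁.of_le zero_le_one)).continuousOn_integral 0 (2 * Real.pi)

theorem hasDerivAt_crossEnergy (hS : UniqueDiffOn ℝ S) (hf : SlabContDiff 3 S f)
    (hg : SlabContDiff 2 S g) (ht : S ∈ 𝓝 t) :
    HasDerivAt (fun t => crossEnergy (f t) (g t))
      (∫ x in 0..2 * Real.pi, (deriv (deriv (pderivT f t)) x * deriv (g t) x
        + deriv (deriv (f t)) x * deriv (pderivT g t) x)) t := by
  have hf₁ : SlabContDiff 2 S (pderivX f) := partialX hS (by norm_num; exact hf)
  have hf₂ : SlabContDiff 1 S (pderivX (pderivX f)) := partialX hS (by norm_num; exact hf₁)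
  have hg₁ : SlabContDiff 1 S (pderivX g) := partialX hS (by norm_num; exact hg)
  have h := hf₂.hasDerivAt_integral_mul hg₁ ht 0 (2 * Real.pi)
  simp only [hf.pderivT_pderivX_pderivX hS ht, hg.pderivT_pderivX ht] at h
  exact h

end SlabContDiff

namespace DampedSystem

/-- A solution on `[1, T]` of the system `S` with transport speed `t^(-α)` and damping `β / t`,
subject to the bootstrap bound `t^(-β/2)` on its size. -/
structure IsSolution (S : DampedSystem) (α β T : ℝ) (y l : ℝ → ℝ → ℝ) : Prop where
  smooth_fst : SlabContDiff 3 (Icc 1 T) y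
  smooth_snd : SlabContDiff 3 (Icc 1 T) l
  pde_fst : ∀ t ∈ Ioo 1 T, pderivT y t = S.rhsFst (t ^ (-α)) (β / t) (y t) (l t)
  pde_snd : ∀ t ∈ Ioo 1 T, pderivT l t = S.rhsSnd (t ^ (-α)) (y t) (l t)
  small : ∀ t ∈ Icc 1 T, SmallPair (t ^ (-(β / 2))) (y t) (l t)

namespace IsSolution

variable {S : DampedSystem} {α β μ M T t : ℝ} {y l : ℝ → ℝ → ℝ}

theorem rate_le (hM : 0 ≤ M) (hμ : μ ≤ α + β / 2) (ht : 1 ≤ t) :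
    t ^ (-α) * (M * t ^ (-(β / 2))) ≤ M * t ^ (-μ) := by
  have hsum : t ^ (-α) * t ^ (-(β / 2)) = t ^ (-(α + β / 2)) := by
    rw [← Real.rpow_add (by linarith)]; ring_nf
  rw [mul_left_comm, hsum]
  gcongr

theorem deriv_secondEnergy_le (h : S.IsSolution α β T y l) (hS : S.Bounded M) (hα1 : α ≤ 1)
    (hβ0 : 0 ≤ β) (hβ1 : β ≤ 1) (hμ : μ ≤ α + β / 2) (ht : t ∈ Ioo 1 T) :
    ∃ J', HasDerivAt (fun t => secondEnergy (y t) + secondEnergy (l t)) J' t ∧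
      J' ≤ -(2 * β / t) * secondEnergy (y t)
        + 8000 * M * t ^ (-μ) * (secondEnergy (y t) + secondEnergy (l t)) := by
  have hI := uniqueDiffOn_Icc (ht.1.trans ht.2)
  have hnhds : Icc 1 T ∈ 𝓝 t := Icc_mem_nhds ht.1 ht.2
  have hsmall := h.small t (Ioo_subset_Icc_self ht)
  have ht0 : 0 < t := one_pos.trans ht.1
  have hM : 0 ≤ M := zero_le_one.trans hS.one_le
  refine ⟨_, (h.smooth_fst.hasDerivAt_secondEnergy hI hnhds).add
    (h.smooth_snd.hasDerivAt_secondEnergy hI hnhds), ?_⟩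
  have hστ : β / t ≤ t ^ (-α) := by
    calc β / t ≤ 1 / t := by gcongr
      _ = t ^ (-1 : ℝ) := by rw [Real.rpow_neg_one, one_div]
      _ ≤ t ^ (-α) := Real.rpow_le_rpow_of_exponent_le ht.1.le (by linarith)
  have hJ := add_nonneg (secondEnergy_nonneg (y t)) (secondEnergy_nonneg (l t))
  have hU := (contDiff_rhsFst (S := S) (τ := t ^ (-α)) (σ := β / t) hsmall).deriv' (n := 1)
  have hV := (contDiff_rhsSnd (S := S) (τ := t ^ (-α)) hsmall).deriv' (n := 1)
  have hy := hsmall.contDiff_deriv_fst.continuous_deriv one_le_two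
  have hl := hsmall.contDiff_deriv_snd.continuous_deriv one_le_two
  rw [h.pde_fst t ht, h.pde_snd t ht, ← mul_add]
  calc 2 * (_ + _) = 2 * _ := congrArg (2 * ·) (intervalIntegral.integral_add
        ((hy.mul hU.continuous_deriv_one).intervalIntegrable _ _)
        ((hl.mul hV.continuous_deriv_one).intervalIntegrable _ _)).symm
    _ ≤ 2 * (-(β / t) * secondEnergy (y t) + 3936 * (t ^ (-α) * (M * t ^ (-(β / 2))))
        * (secondEnergy (y t) + secondEnergy (l t))) := by
        gcongr
        exact integral_dissipation_le hS hsmall (by positivity) hστ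
    _ ≤ 2 * (-(β / t) * secondEnergy (y t)
        + 4000 * (M * t ^ (-μ)) * (secondEnergy (y t) + secondEnergy (l t))) := by
        gcongr ?_ * (_ + ?_ * _)
        refine mul_le_mul (by norm_num) (rate_le hM hμ ht.1.le) ?_ (by norm_num)
        exact mul_nonneg (by positivity) (mul_nonneg hM hsmall.nonneg)
    _ = _ := by ring

theorem le_deriv_crossEnergy (h : S.IsSolution α β T y l) (hS : S.Bounded M) (hβ0 : 0 ≤ β)
    (hβ1 : β ≤ 1) (hμ : μ ≤ α + β / 2) (ht : t ∈ Ioo 1 T) :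
    ∃ X', HasDerivAt (fun t => crossEnergy (y t) (l t)) X' t ∧
      S.b 0 * t ^ (-α) * (secondEnergy (y t) + secondEnergy (l t) - 2 * secondEnergy (y t))
        - 8000 * M * (t ^ (-μ) + 1 / t) * (secondEnergy (y t) + secondEnergy (l t)) ≤ X' := by
  have hsmall := h.small t (Ioo_subset_Icc_self ht)
  have ht0 : 0 < t := one_pos.trans ht.1
  have hM : 0 ≤ M := zero_le_one.trans hS.one_le
  have hJ := add_nonneg (secondEnergy_nonneg (y t)) (secondEnergy_nonneg (l t))
  refine ⟨_, h.smooth_fst.hasDerivAt_crossEnergy (uniqueDiffOn_Icc (ht.1.trans ht.2))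
    (h.smooth_snd.of_le (by norm_num)) (Icc_mem_nhds ht.1 ht.2), ?_⟩
  rw [h.pde_fst t ht, h.pde_snd t ht]
  have hbound := integral_neg_compensator_le hS hsmall
    (σ := β / t) (τ := t ^ (-α)) (by positivity) (by positivity)
  rw [intervalIntegral.integral_neg] at hbound
  have hrate : 164 * (7 * (t ^ (-α) * (M * t ^ (-(β / 2)))) + β / t * M)
        * (secondEnergy (y t) + secondEnergy (l t))
      ≤ 8000 * M * (t ^ (-μ) + 1 / t) * (secondEnergy (y t) + secondEnergy (l t)) := by
    have hσ : β / t * M ≤ 1 / t * M := by gcongr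
    have hμ' : 0 ≤ M * t ^ (-μ) := by positivity
    have ht' : 0 ≤ 1 / t * M := by positivity
    refine mul_le_mul_of_nonneg_right ?_ hJ
    linarith [rate_le hM hμ ht.1.le]
  linarith

theorem hypocoerciveEnergy (h : S.IsSolution α β T y l) (hS : S.Bounded M) (hT : 1 < T)
    (hα1 : α ≤ 1) (hβ0 : 0 ≤ β) (hβ1 : β ≤ 1) (hμ : μ ≤ α + β / 2) :
    HypocoerciveEnergy α β (S.b 0) (8000 * M) μ T
      (fun t => secondEnergy (y t) + secondEnergy (l t)) (fun t => secondEnergy (y t))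
      (fun t => crossEnergy (y t) (l t)) where
  continuousOn_energy :=
    ((h.smooth_fst.of_le (by norm_num)).continuousOn_secondEnergy (uniqueDiffOn_Icc hT)).add
      ((h.smooth_snd.of_le (by norm_num)).continuousOn_secondEnergy (uniqueDiffOn_Icc hT))
  continuousOn_compensator := (h.smooth_fst.of_le (by norm_num)).continuousOn_crossEnergy
    (uniqueDiffOn_Icc hT) (h.smooth_snd.of_le (by norm_num))
  damped_nonneg _ _ := secondEnergy_nonneg _
  abs_compensator_le t ht := by
    have hsmall := h.small t ht
    refine (abs_crossEnergy_le hsmall.fst_two hsmall.snd_two hsmall.periodic_snd).trans ?_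
    have hM := hS.one_le
    exact mul_le_mul_of_nonneg_right (by linarith)
      (add_nonneg (secondEnergy_nonneg _) (secondEnergy_nonneg _))
  deriv_energy_le _ ht := h.deriv_secondEnergy_le hS hα1 hβ0 hβ1 hμ ht
  le_deriv_compensator _ ht := h.le_deriv_crossEnergy hS hβ0 hβ1 hμ ht

end IsSolution

theorem exists_energy_decay (S : DampedSystem) {α β : ℝ} (hα0 : 0 ≤ α) (hα1 : α < 1) (hβ0 : 0 ≤ β)
    (hβ1 : β ≤ 1) (hαβ : 1 < α + β / 2) :
    ∃ C, 0 < C ∧ ∀ {T : ℝ} {y l : ℝ → ℝ → ℝ}, 1 < T → S.IsSolution α β T y l → ∀ t ∈ Icc 1 T,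
      secondEnergy (y t) + secondEnergy (l t)
        ≤ C * (secondEnergy (y 1) + secondEnergy (l 1)) * t ^ (-β) := by
  obtain ⟨M, hM⟩ := S.exists_bounded
  obtain ⟨C, hC, hdecay⟩ := HypocoerciveEnergy.exists_decay (μ := min (α + β / 2) (2 - α)) hα0 hα1
    hβ0 S.b_zero_pos (show 1 ≤ 8000 * M by linarith [hM.one_le])
    (lt_min hαβ (by linarith)) (min_le_right _ _)
  exact ⟨C, hC, fun hT h =>
    hdecay (h.hypocoerciveEnergy hM hT hα1.le hβ0 hβ1 (min_le_left _ _))⟩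

end DampedSystem

/-! ### The rapidity `artanh v` -/

section Artanh

variable {v : ℝ}

theorem one_sub_sq_pos (hv : |v| < 1) : 0 < 1 - v ^ 2 :=
  sub_pos.2 ((sq_lt_one_iff_abs_lt_one v).2 hv)

theorem artanh_eventuallyEq (hv : |v| < 1) :
    Real.artanh =ᶠ[𝓝 v] fun v => 1 / 2 * (Real.log (1 + v) - Real.log (1 - v)) := by
  filter_upwards [Ioo_mem_nhds (abs_lt.1 hv).1 (abs_lt.1 hv).2] with w hw
  rw [Real.artanh_eq_half_log (Ioo_subset_Icc_self hw),
    Real.log_div (by linarith [hw.1]) (by linarith [hw.2])]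

theorem contDiffAt_artanh {n : WithTop ℕ∞} (hv : |v| < 1) : ContDiffAt ℝ n Real.artanh v := by
  have hadd : 1 + v ≠ 0 := by linarith [(abs_lt.1 hv).1]
  have hsub : 1 - v ≠ 0 := by linarith [(abs_lt.1 hv).2]
  exact (contDiffAt_const.mul (((contDiffAt_const.add contDiffAt_id).log hadd).sub
    ((contDiffAt_const.sub contDiffAt_id).log hsub))).congr_of_eventuallyEq (artanh_eventuallyEq hv)

theorem hasDerivAt_artanh (hv : |v| < 1) : HasDerivAt Real.artanh (1 - v ^ 2)⁻¹ v := by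
  have hadd : 1 + v ≠ 0 := by linarith [(abs_lt.1 hv).1]
  have hsub : 1 - v ≠ 0 := by linarith [(abs_lt.1 hv).2]
  refine (((((hasDerivAt_id v).const_add 1).log hadd).sub
    (((hasDerivAt_id v).const_sub 1).log hsub)).const_mul (1 / 2)).congr_deriv ?_
    |>.congr_of_eventuallyEq (artanh_eventuallyEq hv)
  rw [id, show 1 - v ^ 2 = (1 + v) * (1 - v) by ring]
  field_simp
  ring

theorem deriv_deriv_artanh (hv : |v| < 1) :
    deriv (deriv Real.artanh) v = 2 * v * ((1 - v ^ 2)⁻¹) ^ 2 := by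
  have h : deriv Real.artanh =ᶠ[𝓝 v] fun v => (1 - v ^ 2)⁻¹ := by
    filter_upwards [Ioo_mem_nhds (abs_lt.1 hv).1 (abs_lt.1 hv).2] with w hw
    exact (hasDerivAt_artanh (abs_lt.2 hw)).deriv
  rw [h.deriv_eq]
  refine ((((hasDerivAt_id v).pow 2).const_sub 1).inv (one_sub_sq_pos hv).ne').deriv.trans ?_
  simp only [id, Pi.pow_apply]
  field_simp
  ring

theorem abs_inv_one_sub_sq_le (hv : |v| ≤ 1 / 2) : |(1 - v ^ 2)⁻¹| ≤ 4 / 3 := by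
  have h : v ^ 2 ≤ (1 / 2) ^ 2 := sq_le_sq' (abs_le.1 hv).1 (abs_le.1 hv).2
  rw [abs_of_pos (inv_pos.2 (one_sub_sq_pos (by linarith)))]
  exact inv_le_of_inv_le₀ (by norm_num) (by linarith)

theorem abs_artanh_le (hv : |v| ≤ 1 / 2) : |Real.artanh v| ≤ 2 * |v| := by
  have h := Convex.norm_image_sub_le_of_norm_deriv_le (𝕜 := ℝ) (f := Real.artanh) (C := 2) (x := 0)
    (s := Icc (-(1 / 2)) (1 / 2))
    (fun x hx => (hasDerivAt_artanh (by linarith [abs_le.2 hx])).differentiableAt)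
    (fun x hx => by
      rw [(hasDerivAt_artanh (by linarith [abs_le.2 hx])).deriv]
      exact (abs_inv_one_sub_sq_le (abs_le.2 hx)).trans (by norm_num))
    (convex_Icc _ _) (by norm_num) (abs_le.1 hv)
  simpa using h

theorem sinh_artanh_sq (hv : |v| < 1) : Real.sinh (Real.artanh v) ^ 2 = v ^ 2 / (1 - v ^ 2) := by
  rw [Real.sinh_artanh (abs_lt.1 hv), div_pow, Real.sq_sqrt (one_sub_sq_pos hv).le]

theorem sinh_mul_cosh_artanh (hv : |v| < 1) :
    Real.sinh (Real.artanh v) * Real.cosh (Real.artanh v) = v / (1 - v ^ 2) := by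
  rw [Real.sinh_artanh (abs_lt.1 hv), Real.cosh_artanh (abs_lt.1 hv), div_mul_div_comm, mul_one,
    Real.mul_self_sqrt (one_sub_sq_pos hv).le]

theorem contDiff_tanh {n : WithTop ℕ∞} : ContDiff ℝ n Real.tanh := by
  have h : Real.tanh = fun y => Real.sinh y / Real.cosh y := funext Real.tanh_eq_sinh_div_cosh
  rw [h]
  exact Real.contDiff_sinh.div Real.contDiff_cosh fun y => (Real.cosh_pos y).ne'

theorem hasDerivAt_tanh (y : ℝ) : HasDerivAt Real.tanh (1 - Real.tanh y ^ 2) y := by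
  have h : Real.tanh = fun y => Real.sinh y / Real.cosh y := funext Real.tanh_eq_sinh_div_cosh
  have hc := (Real.cosh_pos y).ne'
  rw [h]
  refine ((Real.hasDerivAt_sinh y).div (Real.hasDerivAt_cosh y) hc).congr_deriv ?_
  field_simp

theorem deriv_deriv_tanh (y : ℝ) :
    deriv (deriv Real.tanh) y = -(2 * Real.tanh y * (1 - Real.tanh y ^ 2)) := by
  rw [show deriv Real.tanh = fun y => 1 - Real.tanh y ^ 2 from
    funext fun y => (hasDerivAt_tanh y).deriv]
  refine (((hasDerivAt_tanh y).pow 2).const_sub 1).deriv.trans ?_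
  ring

end Artanh

section Rapidity

variable {v : ℝ → ℝ}

theorem contDiff_artanh_comp {n : WithTop ℕ∞} (hv : ContDiff ℝ n v) (hb : ∀ x, |v x| < 1) :
    ContDiff ℝ n fun x => Real.artanh (v x) :=
  contDiff_iff_contDiffAt.2 fun x => (contDiffAt_artanh (hb x)).comp x hv.contDiffAt

theorem deriv_artanh_comp (hv : Differentiable ℝ v) (hb : ∀ x, |v x| < 1) (x : ℝ) :
    deriv (fun x => Real.artanh (v x)) x = (1 - v x ^ 2)⁻¹ * deriv v x :=
  ((hasDerivAt_artanh (hb x)).comp x (hv x).hasDerivAt).deriv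

theorem secondEnergy_artanh_comp_le (hv : ContDiff ℝ 2 v) (hper : Periodic v (2 * Real.pi))
    (hb : ∀ x, |v x| ≤ 1 / 2) (hb' : ∀ x, |deriv v x| ≤ 1 / 2) :
    secondEnergy (fun x => Real.artanh (v x)) ≤ 328 * secondEnergy v := by
  have hb₁ : ∀ x, |v x| < 1 := fun x => (hb x).trans_lt (by norm_num)
  refine (secondEnergy_comp_le (M := 2) (fun x => contDiffAt_artanh (hb₁ x)) hv hper (fun x => ?_)
    fun x => ?_).trans_eq (by norm_num)
  · rw [(hasDerivAt_artanh (hb₁ x)).deriv]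
    exact (abs_inv_one_sub_sq_le (hb x)).trans (by norm_num)
  · rw [deriv_deriv_artanh (hb₁ x), sq]
    have h2v : |2 * v x| ≤ 1 := by rw [abs_mul, abs_two]; linarith [hb x]
    have hinv := abs_inv_one_sub_sq_le (hb x)
    exact (abs_mul_le (abs_mul_le h2v (abs_mul_le hinv hinv)) (hb' x)).trans (by norm_num)

theorem secondEnergy_le_artanh_comp (hv : ContDiff ℝ 2 v) (hper : Periodic v (2 * Real.pi))
    (hb : ∀ x, |v x| ≤ 1 / 2) (hb' : ∀ x, |deriv v x| ≤ 1 / 2) :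
    secondEnergy v ≤ 82 * secondEnergy (fun x => Real.artanh (v x)) := by
  have hb₁ : ∀ x, |v x| < 1 := fun x => (hb x).trans_lt (by norm_num)
  have htanh : ∀ x, Real.tanh (Real.artanh (v x)) = v x := fun x =>
    Real.tanh_artanh (abs_lt.1 (hb₁ x))
  have hdtanh : ∀ x, |1 - v x ^ 2| ≤ 1 := fun x => by
    rw [abs_of_pos (one_sub_sq_pos (hb₁ x))]; linarith [sq_nonneg (v x)]
  have h := secondEnergy_comp_le (M := 1) (f := Real.tanh) (fun x => contDiff_tanh.contDiffAt)
    (contDiff_artanh_comp hv hb₁) (fun x => congrArg Real.artanh (hper x)) (fun x => ?_)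
    fun x => ?_
  · simpa only [htanh, one_pow, mul_one] using h
  · rw [(hasDerivAt_tanh _).deriv, htanh]
    exact hdtanh x
  · rw [deriv_deriv_tanh, htanh, deriv_artanh_comp (hv.differentiable two_ne_zero) hb₁]
    have h2v : |2 * v x| ≤ 1 := by rw [abs_mul, abs_two]; linarith [hb x]
    rw [neg_mul, abs_neg]
    exact (abs_mul_le (abs_mul_le h2v (hdtanh x))
      (abs_mul_le (abs_inv_one_sub_sq_le (hb x)) (hb' x))).trans (by norm_num)

end Rapidity

namespace SlabContDiff

variable {n : WithTop ℕ∞} {S : Set ℝ} {v : ℝ → ℝ → ℝ} {t : ℝ}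

theorem artanh (hv : SlabContDiff n S v) (hb : ∀ t ∈ S, ∀ x, |v t x| < 1) :
    SlabContDiff n S fun t x => Real.artanh (v t x) := fun p hp =>
  ContDiffAt.comp_contDiffWithinAt (g := Real.artanh) p (contDiffAt_artanh (hb p.1 hp.1 p.2))
    (hv p hp)

theorem pderivT_artanh (hv : SlabContDiff 1 S v) (ht : S ∈ 𝓝 t) {x : ℝ} (hb : |v t x| < 1) :
    pderivT (fun t x => Real.artanh (v t x)) t x = (1 - v t x ^ 2)⁻¹ * pderivT v t x :=
  (HasDerivAt.comp (h₂ := Real.artanh) t (hasDerivAt_artanh hb) (hv.hasDerivAt_time ht x)).deriv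

end SlabContDiff

/-! ### Symmetrization of the Euler system -/

/-- The damping exponent `β = α (1 - 3K)` of the velocity. -/
noncomputable def dampingExponent (α K : ℝ) : ℝ := α * (1 - 3 * K)

/-- The factor `√K / (1 + K)` by which `L` has to be scaled to make the system symmetric. -/
noncomputable def densityScale (K : ℝ) : ℝ := Real.sqrt K / (1 + K)

theorem densityScale_pos {K : ℝ} (hK : 0 < K) : 0 < densityScale K := by
  unfold densityScale; positivity

theorem densityScale_le_one {K : ℝ} (hK : 0 ≤ K) : densityScale K ≤ 1 := by
  refine div_le_one_of_le₀ (Real.sqrt_le_iff.2 ⟨?_, ?_⟩) ?_ <;> nlinarith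

/-- The common denominator `(1 - K v²) / (1 - v²)` of the coefficients, as a function of the
rapidity `y = artanh v`. -/
noncomputable def rapidityDenom (K y : ℝ) : ℝ := 1 + (1 - K) * Real.sinh y ^ 2

section EulerSystem

variable {K v : ℝ}

theorem rapidityDenom_pos (hK : K ≤ 1) (y : ℝ) : 0 < rapidityDenom K y := by
  have := sub_nonneg.2 hK
  unfold rapidityDenom; positivity

theorem contDiff_rapidityDenom {n : WithTop ℕ∞} : ContDiff ℝ n (rapidityDenom K) :=
  contDiff_const.add (contDiff_const.mul (Real.contDiff_sinh.pow 2))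

theorem rapidityDenom_artanh (hv : |v| < 1) :
    rapidityDenom K (Real.artanh v) = (1 - K * v ^ 2) / (1 - v ^ 2) := by
  have := (one_sub_sq_pos hv).ne'
  rw [rapidityDenom, sinh_artanh_sq hv]
  field_simp
  ring

theorem one_sub_mul_sq_pos (hK : K ≤ 1) (hv : |v| < 1) : 0 < 1 - K * v ^ 2 := by
  nlinarith [one_sub_sq_pos hv, sq_nonneg v]

theorem deriv_sinh_sq_mul {f : ℝ → ℝ} (hf : DifferentiableAt ℝ f 0) :
    deriv (fun y => Real.sinh y ^ 2 * f y) 0 = 0 := by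
  refine (((Real.hasDerivAt_sinh 0).pow 2).mul hf.hasDerivAt).deriv.trans ?_
  simp

/-- The Euler system in the variables `y = artanh v` and `l = √K / (1 + K) L`. -/
noncomputable def eulerSystem (K β : ℝ) (hK0 : 0 < K) (hK1 : K ≤ 1) : DampedSystem where
  a y := (1 - K) * (Real.sinh y * Real.cosh y) / rapidityDenom K y
  b y := Real.sqrt K / rapidityDenom K y
  g y := Real.sinh y ^ 2 * (Real.sqrt K * β / rapidityDenom K y)
  h₁ y := Real.sinh y * Real.cosh y
  h₂ y := Real.sinh y ^ 2 * (β * (1 - K) * (Real.sinh y * Real.cosh y) / rapidityDenom K y)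
  contDiff_a := (contDiff_const.mul (Real.contDiff_sinh.mul Real.contDiff_cosh)).div
    contDiff_rapidityDenom fun y => (rapidityDenom_pos hK1 y).ne'
  contDiff_b := contDiff_const.div contDiff_rapidityDenom fun y => (rapidityDenom_pos hK1 y).ne'
  contDiff_g := (Real.contDiff_sinh.pow 2).mul
    (contDiff_const.div contDiff_rapidityDenom fun y => (rapidityDenom_pos hK1 y).ne')
  contDiff_h₁ := Real.contDiff_sinh.mul Real.contDiff_cosh
  contDiff_h₂ := (Real.contDiff_sinh.pow 2).mul
    ((contDiff_const.mul (Real.contDiff_sinh.mul Real.contDiff_cosh)).div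
      contDiff_rapidityDenom fun y => (rapidityDenom_pos hK1 y).ne')
  b_zero_pos := div_pos (Real.sqrt_pos.2 hK0) (rapidityDenom_pos hK1 0)
  deriv_g_zero := deriv_sinh_sq_mul <|
    (contDiff_const.div (contDiff_rapidityDenom (n := 1))
      fun y => (rapidityDenom_pos hK1 y).ne').differentiable one_ne_zero 0
  deriv_h₂_zero := deriv_sinh_sq_mul <|
    ((contDiff_const.mul (Real.contDiff_sinh.mul Real.contDiff_cosh)).div
      (contDiff_rapidityDenom (n := 1))
      fun y => (rapidityDenom_pos hK1 y).ne').differentiable one_ne_zero 0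
  one_le_deriv_h₁ y := by
    rw [show deriv (fun y => Real.sinh y * Real.cosh y) y = _ from
      ((Real.hasDerivAt_sinh y).mul (Real.hasDerivAt_cosh y)).deriv]
    nlinarith [Real.cosh_sq y, sq_nonneg (Real.sinh y)]

end EulerSystem

/-- A solution of the Euler system that is `2π`-periodic in space and of class `C³` for times
in `S`. -/
structure IsRegularEulerSolution (α K : ℝ) (S : Set ℝ) (v L : ℝ → ℝ → ℝ) : Prop where
  isEulerSolution : IsEulerSolution α K v L
  smooth_fst : SlabContDiff 3 S v
  smooth_snd : SlabContDiff 3 S L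
  periodic_fst : ∀ t, Periodic (v t) (2 * Real.pi)
  periodic_snd : ∀ t, Periodic (L t) (2 * Real.pi)

/-- A regular solution of the Euler system on `[1, T]` with `v`, `∂ₓv` and `∂ₓL` bounded by
`N t^(-β/2)`, where `β` is the damping exponent. -/
structure IsSmallEulerSolution (α K N T : ℝ) (v L : ℝ → ℝ → ℝ) : Prop
    extends IsRegularEulerSolution α K (Icc 1 T) v L where
  abs_fst_le : ∀ t ∈ Icc 1 T, ∀ x, |v t x| ≤ N * t ^ (-(dampingExponent α K / 2))
  abs_deriv_fst_le : ∀ t ∈ Icc 1 T, ∀ x, |deriv (v t) x| ≤ N * t ^ (-(dampingExponent α K / 2))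
  abs_deriv_snd_le : ∀ t ∈ Icc 1 T, ∀ x, |deriv (L t) x| ≤ N * t ^ (-(dampingExponent α K / 2))

namespace IsSmallEulerSolution

variable {α K N T t : ℝ} {v L : ℝ → ℝ → ℝ}

theorem rpow_neg_le_one (hβ : 0 ≤ dampingExponent α K) (ht : 1 ≤ t) :
    t ^ (-(dampingExponent α K / 2)) ≤ 1 :=
  Real.rpow_le_one_of_one_le_of_nonpos ht (by linarith)

theorem abs_le_half (hN : N ≤ 1 / 2) (hβ : 0 ≤ dampingExponent α K) (ht : 1 ≤ t) {u : ℝ}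
    (hu : |u| ≤ N * t ^ (-(dampingExponent α K / 2))) : |u| ≤ 1 / 2 := by
  have : 0 ≤ t := zero_le_one.trans ht
  calc |u| ≤ 1 / 2 * 1 := by
        refine hu.trans (mul_le_mul hN (rpow_neg_le_one hβ ht) (by positivity) (by norm_num))
    _ = 1 / 2 := mul_one _

theorem abs_lt_one (h : IsSmallEulerSolution α K N T v L) (hN : N ≤ 1 / 2)
    (hβ : 0 ≤ dampingExponent α K) (ht : t ∈ Icc 1 T) (x : ℝ) : |v t x| < 1 :=
  (abs_le_half hN hβ ht.1 (h.abs_fst_le t ht x)).trans_lt (by norm_num)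

theorem smallPair (h : IsSmallEulerSolution α K N T v L) (hN : N ≤ 1 / 2)
    (hβ : 0 ≤ dampingExponent α K) (hK : 0 < K) (ht : t ∈ Icc 1 T) :
    SmallPair (t ^ (-(dampingExponent α K / 2))) (fun x => Real.artanh (v t x))
      (fun x => densityScale K * L t x) := by
  have ht0 : 0 < t := one_pos.trans_le ht.1
  have hhalf : ∀ {u}, |u| ≤ N * t ^ (-(dampingExponent α K / 2)) →
      |u| ≤ 1 / 2 * t ^ (-(dampingExponent α K / 2)) := fun hu => hu.trans (by gcongr)
  have hv : ∀ x, |v t x| ≤ 1 / 2 := fun x => abs_le_half hN hβ ht.1 (h.abs_fst_le t ht x)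
  have hv₁ := h.abs_lt_one hN hβ ht
  have hp : 0 ≤ t ^ (-(dampingExponent α K / 2)) := by positivity
  refine ⟨contDiff_artanh_comp (h.smooth_fst.slice ht) hv₁,
    contDiff_const.mul (h.smooth_snd.slice ht), fun x => congrArg Real.artanh (h.periodic_fst t x),
    fun x => congrArg (densityScale K * ·) (h.periodic_snd t x), rpow_neg_le_one hβ ht.1,
    fun x => ?_, fun x => ?_, fun x => ?_⟩
  · linarith [abs_artanh_le (hv x), hhalf (h.abs_fst_le t ht x)]
  · rw [deriv_artanh_comp ((h.smooth_fst.slice ht).differentiable three_ne_zero) hv₁]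
    exact (abs_mul_le (abs_inv_one_sub_sq_le (hv x)) (hhalf (h.abs_deriv_fst_le t ht x))).trans
      (by linarith)
  · rw [deriv_const_mul_field]
    have hκ : |densityScale K| ≤ 1 := by
      rw [abs_of_pos (densityScale_pos hK)]; exact densityScale_le_one hK.le
    exact (abs_mul_le hκ (hhalf (h.abs_deriv_snd_le t ht x))).trans (by linarith)

theorem pderivT_artanh (h : IsSmallEulerSolution α K N T v L) (hN : N ≤ 1 / 2)
    (hβ : 0 ≤ dampingExponent α K) (hK0 : 0 < K) (hK1 : K ≤ 1) (ht : t ∈ Ioo 1 T) (x : ℝ) :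
    pderivT (fun t x => Real.artanh (v t x)) t x =
      (eulerSystem K (dampingExponent α K) hK0 hK1).rhsFst (t ^ (-α)) (dampingExponent α K / t)
        (fun x => Real.artanh (v t x)) (fun x => densityScale K * L t x) x := by
  have hv₁ := h.abs_lt_one hN hβ (Ioo_subset_Icc_self ht)
  have hv := (one_sub_sq_pos (hv₁ x)).ne'
  have := (one_sub_mul_sq_pos hK1 (hv₁ x)).ne'
  have hsK : K / (1 + K) = Real.sqrt K ^ 2 / (1 + K) := by rw [Real.sq_sqrt hK0.le]
  have ht0 : t ≠ 0 := by linarith [ht.1]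
  have hK : 1 + K ≠ 0 := by positivity
  rw [(h.smooth_fst.of_le (by norm_num)).pderivT_artanh (Icc_mem_nhds ht.1 ht.2) (hv₁ x),
    (h.isEulerSolution t ht.1.le x).1, hsK]
  simp only [DampedSystem.rhsFst, quasilinear, eulerSystem, deriv_const_mul_field,
    deriv_artanh_comp ((h.smooth_fst.slice (Ioo_subset_Icc_self ht)).differentiable three_ne_zero)
      hv₁, rapidityDenom_artanh (hv₁ x), sinh_artanh_sq (hv₁ x), sinh_mul_cosh_artanh (hv₁ x),
    densityScale, dampingExponent, pderivX]
  field_simp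
  ring

theorem pderivT_densityScale_mul (h : IsSmallEulerSolution α K N T v L) (hN : N ≤ 1 / 2)
    (hβ : 0 ≤ dampingExponent α K) (hK0 : 0 < K) (hK1 : K ≤ 1) (ht : t ∈ Ioo 1 T) (x : ℝ) :
    pderivT (fun t x => densityScale K * L t x) t x =
      (eulerSystem K (dampingExponent α K) hK0 hK1).rhsSnd (t ^ (-α))
        (fun x => Real.artanh (v t x)) (fun x => densityScale K * L t x) x := by
  have hv₁ := h.abs_lt_one hN hβ (Ioo_subset_Icc_self ht)
  have hv := (one_sub_sq_pos (hv₁ x)).ne'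
  have hKv := (one_sub_mul_sq_pos hK1 (hv₁ x)).ne'
  have hK : 1 + K ≠ 0 := by positivity
  rw [pderivT, deriv_const_mul_field, ← pderivT, (h.isEulerSolution t ht.1.le x).2]
  simp only [DampedSystem.rhsSnd, quasilinear, eulerSystem, deriv_const_mul_field,
    deriv_artanh_comp ((h.smooth_fst.slice (Ioo_subset_Icc_self ht)).differentiable three_ne_zero)
      hv₁, rapidityDenom_artanh (hv₁ x), sinh_artanh_sq (hv₁ x), sinh_mul_cosh_artanh (hv₁ x),
    densityScale, dampingExponent, pderivX]
  field_simp
  ring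

theorem isSolution (h : IsSmallEulerSolution α K N T v L) (hN : N ≤ 1 / 2)
    (hβ : 0 ≤ dampingExponent α K) (hK0 : 0 < K) (hK1 : K ≤ 1) :
    (eulerSystem K (dampingExponent α K) hK0 hK1).IsSolution α (dampingExponent α K) T
      (fun t x => Real.artanh (v t x)) (fun t x => densityScale K * L t x) where
  smooth_fst := h.smooth_fst.artanh fun _ ht => h.abs_lt_one hN hβ ht
  smooth_snd := h.smooth_snd.const_mul _
  small _ ht := h.smallPair hN hβ hK0 ht
  pde_fst _ ht := funext fun x => h.pderivT_artanh hN hβ hK0 hK1 ht x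
  pde_snd _ ht := funext fun x => h.pderivT_densityScale_mul hN hβ hK0 hK1 ht x

theorem abs_deriv_le_half (h : IsSmallEulerSolution α K N T v L) (hN : N ≤ 1 / 2)
    (hβ : 0 ≤ dampingExponent α K) (ht : t ∈ Icc 1 T) (x : ℝ) : |deriv (v t) x| ≤ 1 / 2 :=
  abs_le_half hN hβ ht.1 (h.abs_deriv_fst_le t ht x)

theorem symmetrized_energy_le (h : IsSmallEulerSolution α K N T v L) (hN : N ≤ 1 / 2)
    (hβ : 0 ≤ dampingExponent α K) (hK : 0 ≤ K) (ht : t ∈ Icc 1 T) :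
    secondEnergy (fun x => Real.artanh (v t x)) + secondEnergy (fun x => densityScale K * L t x) ≤
      328 * (secondEnergy (v t) + secondEnergy (L t)) := by
  have hartanh := secondEnergy_artanh_comp_le ((h.smooth_fst.slice ht).of_le (by norm_num))
    (h.periodic_fst t) (fun x => abs_le_half hN hβ ht.1 (h.abs_fst_le t ht x))
    (h.abs_deriv_le_half hN hβ ht)
  have hscale : densityScale K ^ 2 ≤ 1 :=
    pow_le_one₀ (by unfold densityScale; positivity) (densityScale_le_one hK)
  rw [secondEnergy_const_mul]
  linarith [mul_le_of_le_one_left (secondEnergy_nonneg (L t)) hscale, secondEnergy_nonneg (L t)]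

theorem energy_le_symmetrized (h : IsSmallEulerSolution α K N T v L) (hN : N ≤ 1 / 2)
    (hβ : 0 ≤ dampingExponent α K) (hK : 0 < K) (ht : t ∈ Icc 1 T) :
    secondEnergy (v t) + secondEnergy (L t) ≤ (82 + (densityScale K ^ 2)⁻¹) *
      (secondEnergy (fun x => Real.artanh (v t x))
        + secondEnergy (fun x => densityScale K * L t x)) := by
  have hartanh := secondEnergy_le_artanh_comp ((h.smooth_fst.slice ht).of_le (by norm_num))
    (h.periodic_fst t) (fun x => abs_le_half hN hβ ht.1 (h.abs_fst_le t ht x))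
    (h.abs_deriv_le_half hN hβ ht)
  have hscale : 0 < densityScale K ^ 2 := pow_pos (densityScale_pos hK) 2
  have hL : secondEnergy (L t) =
      (densityScale K ^ 2)⁻¹ * secondEnergy (fun x => densityScale K * L t x) := by
    rw [secondEnergy_const_mul, inv_mul_cancel_left₀ hscale.ne']
  have hy := mul_nonneg (inv_nonneg.2 hscale.le)
    (secondEnergy_nonneg fun x => Real.artanh (v t x))
  have hl := secondEnergy_nonneg fun x => densityScale K * L t x
  rw [hL]
  linarith

end IsSmallEulerSolution

section StableRegime

variable {α K : ℝ}

theorem lt_one_third_of_stable (hα0 : 0 < α) (hα1 : α < 1) (hstab : 2 / 3 < (1 - K) * α) :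
    K < 1 / 3 := by
  nlinarith

theorem dampingExponent_pos (hα0 : 0 < α) (hK3 : K < 1 / 3) : 0 < dampingExponent α K :=
  mul_pos hα0 (by linarith)

theorem dampingExponent_le_one (hK0 : 0 < K) (hα0 : 0 < α) (hα1 : α < 1) :
    dampingExponent α K ≤ 1 := by
  unfold dampingExponent; nlinarith

-- This is where the threshold `2 / 3` comes from: nonlinear terms decay like `t^(-(α + β / 2))`.
theorem one_lt_add_half_dampingExponent (hstab : 2 / 3 < (1 - K) * α) :
    1 < α + dampingExponent α K / 2 := by
  unfold dampingExponent; linarith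

theorem exists_euler_energy_decay (hK0 : 0 < K) (hα0 : 0 < α) (hα1 : α < 1)
    (hstab : 2 / 3 < (1 - K) * α) :
    ∃ C, 0 < C ∧ ∀ {N T v L}, 1 < T → N ≤ 1 / 2 → IsSmallEulerSolution α K N T v L →
      ∀ t ∈ Icc 1 T, secondEnergy (v t) + secondEnergy (L t) ≤
        C * (secondEnergy (v 1) + secondEnergy (L 1)) * t ^ (-dampingExponent α K) := by
  have hK3 := lt_one_third_of_stable hα0 hα1 hstab
  have hβ := (dampingExponent_pos hα0 hK3).le
  obtain ⟨C, hC, hdecay⟩ :=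
    (eulerSystem K (dampingExponent α K) hK0 (by linarith)).exists_energy_decay hα0.le hα1 hβ
      (dampingExponent_le_one hK0 hα0 hα1) (one_lt_add_half_dampingExponent hstab)
  set c := 82 + (densityScale K ^ 2)⁻¹
  have : 0 < c := by positivity
  refine ⟨c * (C * 328), by positivity, fun {N T v L} hT hN h t ht => ?_⟩
  have ht0 : 0 < t := one_pos.trans_le ht.1
  calc secondEnergy (v t) + secondEnergy (L t)
      ≤ c * (secondEnergy (fun x => Real.artanh (v t x))
          + secondEnergy (fun x => densityScale K * L t x)) :=
        h.energy_le_symmetrized hN hβ hK0 ht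
    _ ≤ c * (C * (secondEnergy (fun x => Real.artanh (v 1 x))
          + secondEnergy (fun x => densityScale K * L 1 x)) * t ^ (-dampingExponent α K)) := by
        gcongr
        exact hdecay hT (h.isSolution hN hβ hK0 (by linarith)) t ht
    _ ≤ c * (C * (328 * (secondEnergy (v 1) + secondEnergy (L 1)))
          * t ^ (-dampingExponent α K)) := by
        gcongr
        exact h.symmetrized_energy_le hN hβ hK0.le (left_mem_Icc.2 hT.le)
    _ = c * (C * 328) * (secondEnergy (v 1) + secondEnergy (L 1))
          * t ^ (-dampingExponent α K) := by ring

end StableRegime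

/-! ### The mean velocity -/

theorem le_add_of_deriv_le_rpow {w w' : ℝ → ℝ} {B γ T t : ℝ} (hB : 0 ≤ B) (hγ : 1 < γ)
    (hw : ContinuousOn w (Icc 1 T)) (hw' : ∀ t ∈ Ioo 1 T, HasDerivAt w (w' t) t)
    (hle : ∀ t ∈ Ioo 1 T, w' t ≤ B * t ^ (-γ)) (ht : t ∈ Icc 1 T) :
    w t ≤ w 1 + B / (γ - 1) := by
  have hγ' : 0 < γ - 1 := sub_pos.2 hγ
  have hprim : ∀ t, 1 ≤ t →
      HasDerivAt (fun t => B / (γ - 1) * t ^ (1 - γ)) (-(B * t ^ (-γ))) t := fun t ht => by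
    refine ((Real.hasDerivAt_rpow_const (p := 1 - γ) (Or.inl (by linarith))).const_mul
      (B / (γ - 1))).congr_deriv ?_
    rw [show 1 - γ - 1 = -γ by ring]
    field_simp
    ring
  have hanti : AntitoneOn (fun t => w t + B / (γ - 1) * t ^ (1 - γ)) (Icc 1 T) := by
    refine antitoneOn_of_hasDerivWithinAt_nonpos (f' := fun t => w' t + -(B * t ^ (-γ)))
      (convex_Icc 1 T)
      (hw.add fun t ht => (hprim t ht.1).continuousAt.continuousWithinAt) ?_ ?_ <;>
      rw [interior_Icc] <;> intro t ht
    · exact ((hw' t ht).add (hprim t ht.1.le)).hasDerivWithinAt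
    · linarith [hle t ht]
  have h := hanti (left_mem_Icc.2 (ht.1.trans ht.2)) ht ht.1
  have ht0 : 0 < t := one_pos.trans_le ht.1
  have hpos : 0 ≤ B / (γ - 1) * t ^ (1 - γ) := by positivity
  simp only [Real.one_rpow, mul_one] at h
  linarith

theorem abs_le_mul_rpow_of_hasDerivAt {m r : ℝ → ℝ} {B β γ T t : ℝ} (hB : 0 ≤ B) (hγ : 1 < γ)
    (hm : ContinuousOn m (Icc 1 T))
    (hm' : ∀ t ∈ Ioo 1 T, HasDerivAt m (-(β / t) * m t + r t) t)
    (hr : ∀ t ∈ Ioo 1 T, |r t| ≤ B * t ^ (-(β + γ))) (ht : t ∈ Icc 1 T) :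
    |m t| ≤ (|m 1| + B / (γ - 1)) * t ^ (-β) := by
  have hpow : ∀ t, 1 ≤ t → HasDerivAt (fun t => t ^ β) (β * t ^ (β - 1)) t := fun t ht =>
    Real.hasDerivAt_rpow_const (Or.inl (by linarith))
  have hw : ContinuousOn (fun t => t ^ β * m t) (Icc 1 T) := ContinuousOn.mul
    (fun t ht => (hpow t ht.1).continuousAt.continuousWithinAt) hm
  have hw' : ∀ t ∈ Ioo 1 T, HasDerivAt (fun t => t ^ β * m t) (t ^ β * r t) t := fun t ht => by
    have ht0 : t ≠ 0 := by linarith [ht.1]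
    refine ((hpow t ht.1.le).mul (hm' t ht)).congr_deriv ?_
    rw [Real.rpow_sub_one ht0]
    field_simp
    ring
  have hbound : ∀ t ∈ Ioo 1 T, |t ^ β * r t| ≤ B * t ^ (-γ) := fun t ht => by
    have ht0 : 0 < t := one_pos.trans ht.1
    calc |t ^ β * r t| ≤ t ^ β * (B * t ^ (-(β + γ))) :=
          abs_mul_le (abs_of_nonneg (by positivity)).le (hr t ht)
      _ = B * t ^ (-γ) := by rw [mul_left_comm, ← Real.rpow_add ht0]; ring_nf
  have hupper := le_add_of_deriv_le_rpow hB hγ hw hw' (fun t ht => (abs_le.1 (hbound t ht)).2) ht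
  have hlower := le_add_of_deriv_le_rpow hB hγ hw.neg (fun t ht => (hw' t ht).neg)
    (fun t ht => by linarith [(abs_le.1 (hbound t ht)).1]) ht
  have ht0 : 0 < t := one_pos.trans_le ht.1
  have htβ : 0 < t ^ β := by positivity
  simp only [Pi.neg_apply, Real.one_rpow, one_mul] at hupper hlower
  rw [Real.rpow_neg ht0.le, ← div_eq_mul_inv, le_div_iff₀ htβ, mul_comm, ← abs_of_pos htβ,
    ← abs_mul]
  exact abs_le.2 ⟨by linarith [neg_le_abs (m 1)], by linarith [le_abs_self (m 1)]⟩

/-- The flux of the velocity equation at a state `(v, L) = (w, q)`, up to the factor `t^(-α)`. -/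
noncomputable def velocityFlux (K w q : ℝ) : ℝ :=
  (1 - K) / (2 * K) * Real.log (1 - K * w ^ 2) - K / (1 + K) * q

/-- What remains of the velocity equation, up to the factor `t^(-α)`, after subtraction of the
damping and of the divergence of `velocityFlux`; here `w` stands for `v` and `q` for `∂ₓL`. -/
noncomputable def cubicRemainder (K β w q : ℝ) : ℝ :=
  w ^ 2 * (1 - K * w ^ 2)⁻¹ * (K / (1 + K) * ((2 - K - w ^ 2) * q) + β * (1 - K) * w)

theorem abs_cubicRemainder_le {K β n w q : ℝ} (hK0 : 0 ≤ K) (hK1 : K ≤ 1) (hβ0 : 0 ≤ β)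
    (hβ1 : β ≤ 1) (hw : |w| ≤ 1 / 2) (hwn : |w| ≤ n) (hqn : |q| ≤ n) :
    |cubicRemainder K β w q| ≤ 3 * n ^ 3 := by
  have hn : 0 ≤ n := (abs_nonneg w).trans hwn
  have hw2 : w ^ 2 ≤ (1 / 2) ^ 2 := sq_le_sq' (abs_le.1 hw).1 (abs_le.1 hw).2
  have hsq : |w ^ 2| ≤ n ^ 2 := by rw [abs_pow]; gcongr
  have hinv : |(1 - K * w ^ 2)⁻¹| ≤ 4 / 3 := by
    have hKw : K * w ^ 2 ≤ 1 * (1 / 2) ^ 2 := by gcongr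
    rw [abs_of_pos (inv_pos.2 (by linarith))]
    exact inv_le_of_inv_le₀ (by norm_num) (by linarith)
  have hKK : |K / (1 + K)| ≤ 1 / 2 := by
    rw [abs_of_nonneg (by positivity), div_le_iff₀ (by positivity)]; linarith
  have hfactor : |2 - K - w ^ 2| ≤ 2 := abs_le.2 ⟨by linarith, by linarith [sq_nonneg w]⟩
  have hdamp : |β * (1 - K)| ≤ 1 :=
    (abs_mul_le (abs_of_nonneg hβ0).le (abs_of_nonneg (sub_nonneg.2 hK1)).le).trans (by nlinarith)
  calc |cubicRemainder K β w q|
      ≤ n ^ 2 * (4 / 3) * (1 / 2 * (2 * n) + 1 * n) :=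
        abs_mul_le (abs_mul_le hsq hinv) ((abs_add_le _ _).trans
          (add_le_add (abs_mul_le hKK (abs_mul_le hfactor hqn)) (abs_mul_le hdamp hwn)))
    _ ≤ 3 * n ^ 3 := by nlinarith [pow_nonneg hn 3]

namespace IsSmallEulerSolution

variable {α K N T t : ℝ} {v L : ℝ → ℝ → ℝ}

theorem contDiff_velocityFlux (h : IsSmallEulerSolution α K N T v L) (hN : N ≤ 1 / 2)
    (hβ : 0 ≤ dampingExponent α K) (hK1 : K ≤ 1) (ht : t ∈ Icc 1 T) :
    ContDiff ℝ 1 fun x => velocityFlux K (v t x) (L t x) :=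
  (contDiff_const.mul <| (contDiff_const.sub <| contDiff_const.mul <|
    ((h.smooth_fst.slice ht).of_le (by norm_num)).pow 2).log fun x =>
      (one_sub_mul_sq_pos hK1 (h.abs_lt_one hN hβ ht x)).ne').sub
    (contDiff_const.mul ((h.smooth_snd.slice ht).of_le (by norm_num)))

theorem deriv_velocityFlux (h : IsSmallEulerSolution α K N T v L) (hN : N ≤ 1 / 2)
    (hβ : 0 ≤ dampingExponent α K) (hK1 : K ≤ 1) (ht : t ∈ Icc 1 T) (x : ℝ) :
    deriv (fun x => velocityFlux K (v t x) (L t x)) x =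
      (1 - K) / (2 * K) * (-(K * (2 * v t x * deriv (v t) x)) / (1 - K * v t x ^ 2))
        - K / (1 + K) * deriv (L t) x := by
  have hv := ((h.smooth_fst.slice ht).differentiable three_ne_zero x).hasDerivAt
  have hL := ((h.smooth_snd.slice ht).differentiable three_ne_zero x).hasDerivAt
  have hne := (one_sub_mul_sq_pos hK1 (h.abs_lt_one hN hβ ht x)).ne'
  refine ((((((hv.pow 2).const_mul K).const_sub 1).log hne).const_mul _).sub
    (hL.const_mul _)).deriv.trans ?_
  simp

theorem continuous_cubicRemainder (h : IsSmallEulerSolution α K N T v L) (hN : N ≤ 1 / 2)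
    (hβ : 0 ≤ dampingExponent α K) (hK1 : K ≤ 1) (ht : t ∈ Icc 1 T) (β : ℝ) :
    Continuous fun x => cubicRemainder K β (v t x) (deriv (L t) x) := by
  have hv := (h.smooth_fst.slice ht).continuous
  have hL := (h.smooth_snd.slice ht).continuous_deriv (by norm_num)
  have hne x := (one_sub_mul_sq_pos hK1 (h.abs_lt_one hN hβ ht x)).ne'
  unfold cubicRemainder
  fun_prop (disch := exact hne)

theorem pderivT_fst_eq (h : IsSmallEulerSolution α K N T v L) (hN : N ≤ 1 / 2)
    (hβ : 0 ≤ dampingExponent α K) (hK0 : 0 < K) (hK1 : K ≤ 1) (ht : t ∈ Icc 1 T) (x : ℝ) :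
    pderivT v t x = -(dampingExponent α K / t) * v t x
      + t ^ (-α) * deriv (fun x => velocityFlux K (v t x) (L t x)) x
      + t ^ (-α) * cubicRemainder K (dampingExponent α K) (v t x) (deriv (L t) x) := by
  have hKv := (one_sub_mul_sq_pos hK1 (h.abs_lt_one hN hβ ht x)).ne'
  have hK : 1 + K ≠ 0 := by positivity
  have ht0 : t ≠ 0 := by linarith [ht.1]
  rw [(h.isEulerSolution t ht.1 x).1, h.deriv_velocityFlux hN hβ hK1 ht]
  unfold cubicRemainder dampingExponent pderivX
  field_simp
  ring

theorem hasDerivAt_meanVel (h : IsSmallEulerSolution α K N T v L) (hN : N ≤ 1 / 2)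
    (hβ : 0 ≤ dampingExponent α K) (hK0 : 0 < K) (hK1 : K ≤ 1) (ht : t ∈ Ioo 1 T) :
    HasDerivAt (meanVel v) (-(dampingExponent α K / t) * meanVel v t + t ^ (-α) *
      ∫ x in (0:ℝ)..(2 * Real.pi),
        cubicRemainder K (dampingExponent α K) (v t x) (deriv (L t) x)) t := by
  have htI := Ioo_subset_Icc_self ht
  have hflux := h.contDiff_velocityFlux hN hβ hK1 htI
  have hflux_zero : ∫ x in (0:ℝ)..(2 * Real.pi),
      deriv (fun x => velocityFlux K (v t x) (L t x)) x = 0 :=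
    integral_deriv_eq_zero_of_periodic hflux
      fun x => congrArg₂ (velocityFlux K) (h.periodic_fst t x) (h.periodic_snd t x)
  have hv := (h.smooth_fst.slice htI).continuous
  have := hflux.continuous_deriv_one
  have hR := h.continuous_cubicRemainder hN hβ hK1 htI (dampingExponent α K)
  refine ((h.smooth_fst.of_le (by norm_num)).hasDerivAt_integral
    (Icc_mem_nhds ht.1 ht.2) 0 (2 * Real.pi)).congr_deriv ?_
  simp only [h.pderivT_fst_eq hN hβ hK0 hK1 htI]
  rw [intervalIntegral.integral_add (Continuous.intervalIntegrable (by fun_prop) _ _)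
      (Continuous.intervalIntegrable (by fun_prop) _ _),
    intervalIntegral.integral_add (Continuous.intervalIntegrable (by fun_prop) _ _)
      (Continuous.intervalIntegrable (by fun_prop) _ _),
    intervalIntegral.integral_const_mul, intervalIntegral.integral_const_mul,
    intervalIntegral.integral_const_mul, hflux_zero, mul_zero, add_zero, meanVel]

theorem abs_integral_cubicRemainder_le (h : IsSmallEulerSolution α K N T v L) (hN : N ≤ 1 / 2)
    (hβ0 : 0 ≤ dampingExponent α K) (hβ1 : dampingExponent α K ≤ 1) (hK0 : 0 ≤ K) (hK1 : K ≤ 1)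
    (ht : t ∈ Icc 1 T) :
    |t ^ (-α) * ∫ x in (0:ℝ)..(2 * Real.pi),
        cubicRemainder K (dampingExponent α K) (v t x) (deriv (L t) x)| ≤
      6 * Real.pi * N ^ 3 * t ^ (-(dampingExponent α K + (α + dampingExponent α K / 2))) := by
  have ht0 : 0 < t := one_pos.trans_le ht.1
  have hint : |∫ x in (0:ℝ)..(2 * Real.pi),
      cubicRemainder K (dampingExponent α K) (v t x) (deriv (L t) x)| ≤
        3 * (N * t ^ (-(dampingExponent α K / 2))) ^ 3 * |2 * Real.pi - 0| := by
    rw [← Real.norm_eq_abs]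
    exact intervalIntegral.norm_integral_le_of_norm_le_const fun x _ =>
      abs_cubicRemainder_le hK0 hK1 hβ0 hβ1 (abs_le_half hN hβ0 ht.1 (h.abs_fst_le t ht x))
        (h.abs_fst_le t ht x) (h.abs_deriv_snd_le t ht x)
  have hpow : t ^ (-(dampingExponent α K + (α + dampingExponent α K / 2))) =
      t ^ (-α) * (t ^ (-(dampingExponent α K / 2))) ^ 3 := by
    rw [← Real.rpow_natCast, ← Real.rpow_mul ht0.le, ← Real.rpow_add ht0]
    push_cast
    ring_nf
  rw [sub_zero, abs_of_pos Real.two_pi_pos] at hint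
  refine (abs_mul_le (abs_of_nonneg (by positivity)).le hint).trans_eq ?_
  rw [hpow]
  ring

theorem abs_meanVel_le (h : IsSmallEulerSolution α K N T v L) (hN : N ≤ 1 / 2) (hK0 : 0 < K)
    (hα0 : 0 < α) (hα1 : α < 1) (hstab : 2 / 3 < (1 - K) * α) (ht : t ∈ Icc 1 T) :
    |meanVel v t| ≤ (|meanVel v 1| + 6 * Real.pi * N ^ 3 / (α + dampingExponent α K / 2 - 1))
      * t ^ (-dampingExponent α K) := by
  have hK3 := lt_one_third_of_stable hα0 hα1 hstab
  have hK1 : K ≤ 1 := by linarith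
  have hβ := (dampingExponent_pos hα0 hK3).le
  have hT : (1:ℝ) ∈ Icc 1 T := left_mem_Icc.2 (ht.1.trans ht.2)
  have hN0 : 0 ≤ N := by simpa using (abs_nonneg _).trans (h.abs_fst_le 1 hT 0)
  exact abs_le_mul_rpow_of_hasDerivAt (by positivity) (one_lt_add_half_dampingExponent hstab)
    ((h.smooth_fst.of_le (by norm_num)).continuousOn_integral 0 (2 * Real.pi))
    (fun s hs => h.hasDerivAt_meanVel hN hβ hK0 hK1 hs)
    (fun s hs => h.abs_integral_cubicRemainder_le hN hβ (dampingExponent_le_one hK0 hα0 hα1) hK0.le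
      hK1 (Ioo_subset_Icc_self hs)) ht

end IsSmallEulerSolution

/-! ### The bootstrap -/

theorem lt_of_forall_le_imp_lt {f g : ℝ → ℝ} {a t : ℝ} (hf : ContinuousOn f (Ici a))
    (hg : ContinuousOn g (Ici a)) (ha : f a < g a)
    (himp : ∀ T, a < T → (∀ t ∈ Icc a T, f t ≤ g t) → f T < g T) (ht : a ≤ t) : f t < g t := by
  by_contra! hgt
  have hcompact : IsCompact {r ∈ Icc a t | g r ≤ f r} := isCompact_Icc.of_isClosed_subset
    (isClosed_Icc.isClosed_le (hg.mono Icc_subset_Ici_self) (hf.mono Icc_subset_Ici_self))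
    (sep_subset _ _)
  obtain ⟨T, ⟨hT, hgT⟩, hleast⟩ := hcompact.exists_isLeast ⟨t, ⟨ht, le_rfl⟩, hgt⟩
  have hbefore : ∀ r ∈ Ico a T, f r ≤ g r := fun r hr => by
    by_contra! hgr
    exact hr.2.not_ge (hleast ⟨⟨hr.1, hr.2.le.trans hT.2⟩, hgr.le⟩)
  have haT : a < T := lt_of_le_of_ne hT.1 fun h => ha.not_ge (h ▸ hgT)
  have hclosure : closure (Ico a T) = Icc a T := closure_Ico haT.ne
  exact (himp T haT fun r hr => le_on_closure hbefore (hclosure ▸ hf.mono Icc_subset_Ici_self)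
    (hclosure ▸ hg.mono Icc_subset_Ici_self) (hclosure ▸ hr)).not_ge hgT

section Slice

variable {φ : ℝ → ℝ} {n : ℝ}

theorem abs_deriv_le_of_secondEnergy_le (hφ : ContDiff ℝ 2 φ) (hper : Periodic φ (2 * Real.pi))
    (hn : 0 ≤ n) (h : secondEnergy φ ≤ n ^ 2) (x : ℝ) : |deriv φ x| ≤ 3 * n := by
  refine abs_le_of_sq_le_sq ?_ (by positivity)
  calc deriv φ x ^ 2 ≤ 2 * Real.pi * secondEnergy φ :=
        sq_deriv_le_integral_sq Real.two_pi_pos hφ hper x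
    _ ≤ 9 * n ^ 2 := by
        gcongr
        · exact secondEnergy_nonneg φ
        · linarith [Real.pi_lt_four]
    _ = (3 * n) ^ 2 := by ring

theorem abs_le_of_secondEnergy_le (hφ : ContDiff ℝ 2 φ) (hper : Periodic φ (2 * Real.pi))
    (hn : 0 ≤ n) (hmean : |∫ x in (0 : ℝ)..(2 * Real.pi), φ x| ≤ n) (h : secondEnergy φ ≤ n ^ 2)
    (x : ℝ) : |φ x| ≤ 22 * n := by
  calc |φ x| ≤ |∫ x in (0:ℝ)..(2 * Real.pi), φ x| / (2 * Real.pi) + 2 * Real.pi * (3 * n) :=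
        abs_le_abs_mean_add Real.two_pi_pos (hφ.differentiable two_ne_zero) hper
          (abs_deriv_le_of_secondEnergy_le hφ hper hn h) x
    _ ≤ n / 1 + 7 * (3 * n) := by
        gcongr <;> linarith [Real.pi_gt_three, Real.pi_lt_d2]
    _ = 22 * n := by ring

end Slice

/-- The quantity controlled in the bootstrap argument; being invariant under adding constants to
`L`, it says nothing about the mean of `L`. -/
noncomputable def perturbationEnergy (v L : ℝ → ℝ → ℝ) (t : ℝ) : ℝ :=
  meanVel v t ^ 2 + (secondEnergy (v t) + secondEnergy (L t))

section PerturbationEnergy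

variable {α K η t T : ℝ} {v L : ℝ → ℝ → ℝ}

theorem L2normCirc_nonneg (g : ℝ → ℝ) : 0 ≤ L2normCirc g := Real.sqrt_nonneg _

theorem sobolevNorm2_nonneg (v L : ℝ → ℝ → ℝ) (t : ℝ) : 0 ≤ sobolevNorm2 v L t := by
  unfold sobolevNorm2
  linarith [L2normCirc_nonneg (deriv (v t)), L2normCirc_nonneg (deriv (deriv (v t))),
    L2normCirc_nonneg (deriv (L t)), L2normCirc_nonneg (deriv (deriv (L t)))]

theorem perturbationEnergy_lt_sq {ε : ℝ} (h : |meanVel v t| + sobolevNorm2 v L t < ε) :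
    perturbationEnergy v L t < ε ^ 2 := by
  have hv : L2normCirc (deriv (deriv (v t))) ^ 2 = secondEnergy (v t) :=
    Real.sq_sqrt (secondEnergy_nonneg (v t))
  have hL : L2normCirc (deriv (deriv (L t))) ^ 2 = secondEnergy (L t) :=
    Real.sq_sqrt (secondEnergy_nonneg (L t))
  have hm₀ := abs_nonneg (meanVel v t)
  have hv₀ := L2normCirc_nonneg (deriv (deriv (v t)))
  have hL₀ := L2normCirc_nonneg (deriv (deriv (L t)))
  have hsum : |meanVel v t| + L2normCirc (deriv (deriv (v t)))
      + L2normCirc (deriv (deriv (L t))) < ε := by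
    unfold sobolevNorm2 at h
    linarith [L2normCirc_nonneg (deriv (v t)), L2normCirc_nonneg (deriv (L t))]
  calc perturbationEnergy v L t = |meanVel v t| ^ 2 + (L2normCirc (deriv (deriv (v t))) ^ 2
          + L2normCirc (deriv (deriv (L t))) ^ 2) := by rw [perturbationEnergy, hv, hL, sq_abs]
    _ ≤ (|meanVel v t| + L2normCirc (deriv (deriv (v t)))
          + L2normCirc (deriv (deriv (L t)))) ^ 2 := by
        nlinarith [mul_nonneg hm₀ hv₀, mul_nonneg hm₀ hL₀, mul_nonneg hv₀ hL₀]
    _ < ε ^ 2 := by gcongr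

theorem perturbationEnergy_lt {p : ℝ} (hη : 0 < η) (hp0 : 0 < p) (hp1 : p ≤ 1)
    (hm : |meanVel v t| ≤ η / 2 * p)
    (hI : secondEnergy (v t) + secondEnergy (L t) ≤ η ^ 2 / 4 * p) :
    perturbationEnergy v L t < η ^ 2 * p := by
  calc perturbationEnergy v L t
      = |meanVel v t| ^ 2 + (secondEnergy (v t) + secondEnergy (L t)) := by
        rw [perturbationEnergy, sq_abs]
    _ ≤ (η / 2 * p) ^ 2 + η ^ 2 / 4 * p := by gcongr
    _ = η ^ 2 / 4 * (p * p) + η ^ 2 / 4 * p := by ring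
    _ ≤ η ^ 2 / 4 * p + η ^ 2 / 4 * p := by gcongr; exact mul_le_of_le_one_left hp0.le hp1
    _ < η ^ 2 * p := by nlinarith [mul_pos (pow_pos hη 2) hp0]

theorem IsRegularEulerSolution.mono {S S' : Set ℝ} (h : IsRegularEulerSolution α K S v L)
    (hS : S' ⊆ S) : IsRegularEulerSolution α K S' v L :=
  ⟨h.isEulerSolution, h.smooth_fst.mono hS, h.smooth_snd.mono hS, h.periodic_fst, h.periodic_snd⟩

theorem IsRegularEulerSolution.continuousOn_perturbationEnergy {S : Set ℝ}
    (h : IsRegularEulerSolution α K S v L) (hS : UniqueDiffOn ℝ S) :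
    ContinuousOn (perturbationEnergy v L) S :=
  (((h.smooth_fst.of_le (by norm_num)).continuousOn_integral 0 (2 * Real.pi)).pow 2).add
    (((h.smooth_fst.of_le (by norm_num)).continuousOn_secondEnergy hS).add
      ((h.smooth_snd.of_le (by norm_num)).continuousOn_secondEnergy hS))

theorem IsRegularEulerSolution.isSmallEulerSolution
    (h : IsRegularEulerSolution α K (Icc 1 T) v L) (hη : 0 ≤ η)
    (hE : ∀ t ∈ Icc 1 T, perturbationEnergy v L t ≤ η ^ 2 * t ^ (-dampingExponent α K)) :
    IsSmallEulerSolution α K (22 * η) T v L := by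
  have hbounds : ∀ t ∈ Icc 1 T, 0 ≤ η * t ^ (-(dampingExponent α K / 2)) ∧
      |meanVel v t| ≤ η * t ^ (-(dampingExponent α K / 2)) ∧
      secondEnergy (v t) ≤ (η * t ^ (-(dampingExponent α K / 2))) ^ 2 ∧
      secondEnergy (L t) ≤ (η * t ^ (-(dampingExponent α K / 2))) ^ 2 := fun t ht => by
    have ht0 : 0 < t := one_pos.trans_le ht.1
    have hn : 0 ≤ η * t ^ (-(dampingExponent α K / 2)) := by positivity
    have hsq : (η * t ^ (-(dampingExponent α K / 2))) ^ 2 =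
        η ^ 2 * t ^ (-dampingExponent α K) := by
      rw [mul_pow, ← Real.rpow_mul_natCast ht0.le]
      push_cast
      ring_nf
    have hEt := hE t ht
    rw [perturbationEnergy, ← hsq] at hEt
    have hm := sq_nonneg (meanVel v t)
    have hv := secondEnergy_nonneg (v t)
    have hL := secondEnergy_nonneg (L t)
    exact ⟨hn, abs_le_of_sq_le_sq (by linarith) hn, by linarith, by linarith⟩
  refine ⟨h, fun t ht x => ?_, fun t ht x => ?_, fun t ht x => ?_⟩ <;>
    obtain ⟨hn, hm, hv, hL⟩ := hbounds t ht <;> rw [mul_assoc]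
  · exact abs_le_of_secondEnergy_le ((h.smooth_fst.slice ht).of_le (by norm_num))
      (h.periodic_fst t) hn hm hv x
  · linarith [abs_deriv_le_of_secondEnergy_le ((h.smooth_fst.slice ht).of_le (by norm_num))
      (h.periodic_fst t) hn hv x]
  · linarith [abs_deriv_le_of_secondEnergy_le ((h.smooth_snd.slice ht).of_le (by norm_num))
      (h.periodic_snd t) hn hL x]

end PerturbationEnergy

theorem exists_bootstrap_constants {A B : ℝ} (hA : 0 < A) (hB : 0 < B) :
    ∃ η > 0, ∃ ε > 0, ε ≤ η ∧ 22 * η ≤ 1 / 2 ∧ ε + B * (22 * η) ^ 3 ≤ η / 2 ∧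
      A * ε ^ 2 ≤ η ^ 2 / 4 := by
  obtain ⟨η, hη, hη1, hηB⟩ : ∃ η > 0, 44 * η ≤ 1 ∧ 4 * 22 ^ 3 * B * η ≤ 1 := by
    refine ⟨1 / (44 + 4 * 22 ^ 3 * B), by positivity, ?_, ?_⟩ <;>
      rw [mul_one_div] <;> apply div_le_one_of_le₀ <;> linarith
  obtain ⟨ε, hε, hε1, hεA⟩ : ∃ ε > 0, 4 * ε ≤ η ∧ 4 * A * ε ≤ η := by
    refine ⟨η / (4 * (1 + A)), by positivity, ?_, ?_⟩ <;>
      rw [mul_div_assoc', div_le_iff₀ (by positivity)] <;> nlinarith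
  refine ⟨η, hη, ε, hε, by linarith, by linarith, ?_, ?_⟩
  · have : B * (22 * η) ^ 3 = 4 * 22 ^ 3 * B * η * η ^ 2 / 4 := by ring
    nlinarith
  · calc A * ε ^ 2 = 4 * A * ε * ε / 4 := by ring
      _ ≤ η * η / 4 := by gcongr; linarith
      _ = η ^ 2 / 4 := by ring

theorem exists_bootstrap_improvement {α K : ℝ} (hK0 : 0 < K) (hα0 : 0 < α) (hα1 : α < 1)
    (hstab : 2 / 3 < (1 - K) * α) :
    ∃ η > 0, ∃ ε > 0, ε ≤ η ∧ ∀ {T v L}, 1 < T → IsRegularEulerSolution α K (Icc 1 T) v L →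
      |meanVel v 1| + sobolevNorm2 v L 1 < ε →
      (∀ t ∈ Icc 1 T, perturbationEnergy v L t ≤ η ^ 2 * t ^ (-dampingExponent α K)) →
      ∀ t ∈ Icc 1 T, |meanVel v t| ≤ η / 2 * t ^ (-dampingExponent α K) ∧
        perturbationEnergy v L t < η ^ 2 * t ^ (-dampingExponent α K) := by
  obtain ⟨A, hA, hdecay⟩ := exists_euler_energy_decay hK0 hα0 hα1 hstab
  have hrate := sub_pos.2 (one_lt_add_half_dampingExponent hstab)
  obtain ⟨η, hη, ε, hε, hεη, hη1, hmean, henergy⟩ := exists_bootstrap_constants hA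
    (B := 6 * Real.pi / (α + dampingExponent α K / 2 - 1)) (by positivity)
  refine ⟨η, hη, ε, hε, hεη, fun {T v L} hT h hdata hE t ht => ?_⟩
  have hsmall := h.isSmallEulerSolution hη.le hE
  have ht0 : 0 < t := one_pos.trans_le ht.1
  have hm : |meanVel v t| ≤ η / 2 * t ^ (-dampingExponent α K) := by
    refine (hsmall.abs_meanVel_le hη1 hK0 hα0 hα1 hstab ht).trans ?_
    rw [mul_div_right_comm]
    gcongr
    linarith [sobolevNorm2_nonneg v L 1]
  have hI : secondEnergy (v t) + secondEnergy (L t) ≤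
      η ^ 2 / 4 * t ^ (-dampingExponent α K) := by
    have hinit : secondEnergy (v 1) + secondEnergy (L 1) ≤ ε ^ 2 :=
      (le_add_of_nonneg_left (sq_nonneg _)).trans (perturbationEnergy_lt_sq hdata).le
    refine (hdecay hT hη1 hsmall t ht).trans ?_
    gcongr
    exact (mul_le_mul_of_nonneg_left hinit hA.le).trans henergy
  exact ⟨hm, perturbationEnergy_lt hη (by positivity) (Real.rpow_le_one_of_one_le_of_nonpos ht.1
    (neg_nonpos.2 (dampingExponent_pos hα0 (lt_one_third_of_stable hα0 hα1 hstab)).le)) hm hI⟩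

theorem stability_decay_mean_velocity_general {α K : ℝ} (hK0 : 0 < K) (hα0 : 0 < α) (hα1 : α < 1)
    (hstab : 2 / 3 < (1 - K) * α) :
    ∃ ε > 0, ∃ C > 0, ∀ v L : ℝ → ℝ → ℝ,
      ContDiffOn ℝ 3 (fun p : ℝ × ℝ => v p.1 p.2) (Ici 1 ×ˢ univ) →
      ContDiffOn ℝ 3 (fun p : ℝ × ℝ => L p.1 p.2) (Ici 1 ×ˢ univ) →
      (∀ t x, v t (x + 2 * Real.pi) = v t x) →
      (∀ t x, L t (x + 2 * Real.pi) = L t x) →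
      IsEulerSolution α K v L →
      |meanVel v 1| + sobolevNorm2 v L 1 < ε →
      ∀ t, 1 ≤ t → |meanVel v t| ≤ C * t ^ (-(α * (1 - 3 * K))) := by
  obtain ⟨η, hη, ε, hε, hεη, himprove⟩ := exists_bootstrap_improvement hK0 hα0 hα1 hstab
  refine ⟨ε, hε, η / 2, by positivity, fun v L hv hL hvper hLper hEuler hdata => ?_⟩
  have hsol : IsRegularEulerSolution α K (Ici 1) v L := ⟨hEuler, hv, hL, hvper, hLper⟩
  have hglobal : ∀ t, 1 ≤ t → perturbationEnergy v L t < η ^ 2 * t ^ (-dampingExponent α K) := by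
    refine fun t => lt_of_forall_le_imp_lt (g := fun s => η ^ 2 * s ^ (-dampingExponent α K))
      (hsol.continuousOn_perturbationEnergy (uniqueDiffOn_Ici 1)) ?_ ?_ ?_
    · exact continuousOn_const.mul (continuousOn_id.rpow_const fun t ht =>
        Or.inl (one_pos.trans_le ht).ne')
    · simp only [Real.one_rpow, mul_one]
      exact (perturbationEnergy_lt_sq hdata).trans_le (by gcongr)
    · exact fun T hT hE => (himprove hT (hsol.mono Icc_subset_Ici_self) hdata hE T
        (right_mem_Icc.2 hT.le)).2
  intro t ht
  exact (himprove (T := t + 1) (by linarith) (hsol.mono Icc_subset_Ici_self) hdata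
    (fun s hs => (hglobal s hs.1).le) t ⟨ht, by linarith⟩).1

end

/-- In the stable regime `(1−K)α > 2/3`, `0 < K < 1/3`, small perturbations of the quiet
fluid have mean velocity decaying at the rate `t^(−α(1−3K)+δ)`. -/
theorem stability_decay_mean_velocity
    (α K : ℝ) (hK0 : 0 < K) (hK3 : K < 1 / 3) (hα0 : 0 < α) (hα1 : α < 1)
    (hstab : (1 - K) * α > 2 / 3) (δ : ℝ) (hδ : 0 < δ) :
    ∃ ε > 0, ∃ C > 0, ∀ v L : ℝ → ℝ → ℝ,
      ContDiffOn ℝ (⊤ : ℕ∞) (fun p : ℝ × ℝ => v p.1 p.2) (Set.Ici 1 ×ˢ Set.univ) →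
      ContDiffOn ℝ (⊤ : ℕ∞) (fun p : ℝ × ℝ => L p.1 p.2) (Set.Ici 1 ×ˢ Set.univ) →
      (∀ t x, v t (x + 2 * Real.pi) = v t x) →
      (∀ t x, L t (x + 2 * Real.pi) = L t x) →
      IsEulerSolution α K v L →
      |meanVel v 1| + sobolevNorm2 v L 1 < ε →
      ∀ t, 1 ≤ t → |meanVel v t| ≤ C * t ^ (-(α * (1 - 3 * K)) + δ) := by
  obtain ⟨ε, hε, C, hC, hdecay⟩ := stability_decay_mean_velocity_general hK0 hα0 hα1 hstab
  have hsmooth : (3 : WithTop ℕ∞) ≤ ((⊤ : ℕ∞) : WithTop ℕ∞) := WithTop.coe_le_coe.2 le_top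
  exact ⟨ε, hε, C, hC, fun v L hv hL hvper hLper hEuler hdata t ht =>
    (hdecay v L (hv.of_le hsmooth) (hL.of_le hsmooth) hvper hLper hEuler hdata t ht).trans
      (by gcongr; linarith)⟩
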